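/- arXiv:0907.5224 — 4 statements merged into one kernel-verified Lean document; each statement's English description precedes it below -/
import Mathlib

section
/- The number of genus-zero Hurwitz covers of the projective line with profile a single part (k), counted with automorphism weights, equals k^{k-3}; that is, h_{0,(k)} = k^{k-3} for every positive integer k. -/
open Equiv

/-- The number of Hurwitz factorizations of the identity in `S_d` into `r` transpositions
and one permutation of cycle type (including fixed points) given by the multiset `μ`,
generating a transitive subgroup.  By monodromy, the Hurwitz number `h_{g,μ}` equals
this count divided by `d!`, where `r = 2g - 2 + ℓ(μ) + |μ|`. -/
noncomputable def hurwitzCount (d r : ℕ) (μ : Multiset ℕ) : ℕ :=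
  Nat.card {p : (Fin r → Perm (Fin d)) × Perm (Fin d) //
    (∀ i, (p.1 i).IsSwap) ∧
    (Equiv.Perm.partition p.2).parts = μ ∧
    (List.ofFn p.1).prod * p.2 = 1 ∧
    (∀ a b : Fin d, ∃ g ∈ Subgroup.closure (Set.range p.1 ∪ {p.2}), g a = b)}

/-- The Hurwitz number `h_{g,μ}`: the weighted (by `1/|Aut f|`) count of topological
types of genus-`g` covers of `ℙ¹` with profile `μ` over `∞` and
`r = 2g - 2 + ℓ(μ) + |μ|` simple ramification points, expressed via monodromy
factorizations. -/
noncomputable def hurwitzNumber (g : ℕ) (μ : Multiset ℕ) : ℚ :=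
  (hurwitzCount μ.sum (2 * g + Multiset.card μ + μ.sum - 2) μ : ℚ) /
    (Nat.factorial μ.sum : ℚ)

section HurwitzAux

open Finset

variable {α : Type*} [Fintype α] [DecidableEq α]

open Classical in
/-- The cycle of `x` as a finset. -/
noncomputable def hwC (σ : Perm α) (x : α) : Finset α := univ.filter (fun y => σ.SameCycle x y)

theorem hw_mem_C {σ : Perm α} {x y : α} : y ∈ hwC σ x ↔ σ.SameCycle x y := by
  simp [hwC]

theorem hw_self_mem (σ : Perm α) (x : α) : x ∈ hwC σ x := hw_mem_C.2 (Perm.SameCycle.refl σ x)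

theorem hw_C_eq_iff {σ : Perm α} {x y : α} : hwC σ x = hwC σ y ↔ σ.SameCycle x y := by
  constructor
  · intro h
    rw [← hw_mem_C, h]; exact hw_self_mem σ y
  · intro h
    ext z
    rw [hw_mem_C, hw_mem_C]
    exact ⟨fun h1 => h.symm.trans h1, fun h1 => h.trans h1⟩

/-- The set of cycles (including fixed points). -/
noncomputable def hwP (σ : Perm α) : Finset (Finset α) := univ.image (hwC σ)

theorem hw_C_mem_P (σ : Perm α) (x : α) : hwC σ x ∈ hwP σ := mem_image_of_mem _ (mem_univ x)

/-- product of cycle lengths -/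
noncomputable def hwW (σ : Perm α) : ℚ := ∏ p ∈ hwP σ, (p.card : ℚ)

theorem hw_card_pos (σ : Perm α) (x : α) : (0 : ℚ) < ((hwC σ x).card : ℚ) := by
  exact_mod_cast card_pos.2 ⟨x, hw_self_mem σ x⟩

theorem hw_sum_inv (σ : Perm α) : ∑ x, ((hwC σ x).card : ℚ)⁻¹ = ((hwP σ).card : ℚ) := by
  rw [← sum_fiberwise_of_maps_to (s := univ) (t := hwP σ) (g := hwC σ)
    (fun x _ => hw_C_mem_P σ x)]
  rw [card_eq_sum_ones, Nat.cast_sum]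
  refine sum_congr rfl fun p hp => ?_
  obtain ⟨z, -, rfl⟩ := mem_image.1 hp
  have h1 : (univ.filter fun x => hwC σ x = hwC σ z) = hwC σ z := by
    ext x
    rw [mem_filter, hw_C_eq_iff, hw_mem_C]
    simp [Perm.sameCycle_comm]
  rw [h1, sum_congr rfl (g := fun _ => ((hwC σ z).card : ℚ)⁻¹)]
  · rw [sum_const, nsmul_eq_mul]
    have := hw_card_pos σ z
    field_simp
    norm_num
  · intro x hx
    rw [hw_C_eq_iff.2 (hw_mem_C.1 hx).symm]

/-- in the same cycle case, cycles get refined -/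
theorem hw_same_of_mul_swap {σ : Perm α} {x y : α} (h : σ.SameCycle x y) {a b : α}
    (hab : (σ * swap x y).SameCycle a b) : σ.SameCycle a b := by
  have key : ∀ z, σ.SameCycle z ((σ * swap x y) z) := by
    intro z
    rw [Perm.mul_apply, Perm.sameCycle_apply_right]
    rcases eq_or_ne z x with rfl | hx
    · rwa [swap_apply_left]
    rcases eq_or_ne z y with rfl | hy
    · rw [swap_apply_right]; exact h.symm
    rw [swap_apply_of_ne_of_ne hx hy]
  obtain ⟨n, -, rfl⟩ := hab.exists_pow_eq'
  clear hab
  induction n with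
  | zero => exact Perm.SameCycle.refl _ _
  | succ n ih =>
    rw [pow_succ', Perm.mul_apply]
    exact ih.trans (key _)

theorem hw_card_same {σ : Perm α} {x y : α} (h : σ.SameCycle x y) :
    (hwP σ).card ≤ (hwP (σ * swap x y)).card := by
  have : ((hwP σ).card : ℚ) ≤ ((hwP (σ * swap x y)).card : ℚ) := by
    rw [← hw_sum_inv, ← hw_sum_inv]
    refine sum_le_sum fun z _ => ?_
    refine inv_anti₀ (hw_card_pos _ z) ?_
    have : hwC (σ * swap x y) z ⊆ hwC σ z := fun w hw =>
      hw_mem_C.2 (hw_same_of_mul_swap h (hw_mem_C.1 hw))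
    exact_mod_cast card_le_card this
  exact_mod_cast this

theorem hw_join_xy {σ : Perm α} {x y : α} (h : ¬ σ.SameCycle x y) :
    (σ * swap x y).SameCycle x y := by
  by_contra hcon
  have key : ∀ n : ℕ, (σ * swap x y).SameCycle x ((σ ^ (n + 1)) y) := by
    intro n
    induction n with
    | zero =>
      have : (σ ^ (0 + 1)) y = (σ * swap x y) x := by simp
      rw [this, Perm.sameCycle_apply_right]
    | succ n ih =>
      have hx : (σ ^ (n + 1)) y ≠ x := by
        intro h1
        apply h
        rw [← h1]
        exact (Perm.sameCycle_pow_left).2 (Perm.SameCycle.refl _ _)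
      have hy : (σ ^ (n + 1)) y ≠ y := by
        intro h1
        rw [h1] at ih
        exact hcon ih
      have : (σ ^ (n + 1 + 1)) y = (σ * swap x y) ((σ ^ (n + 1)) y) := by
        rw [Perm.mul_apply, swap_apply_of_ne_of_ne hx hy, pow_succ' σ (n + 1), Perm.mul_apply]
      rw [this, Perm.sameCycle_apply_right]
      exact ih
  have h2 := key (orderOf σ - 1)
  rw [Nat.sub_add_cancel (orderOf_pos σ), pow_orderOf_eq_one] at h2
  exact hcon h2

theorem hw_join_mono {σ : Perm α} {x y : α} (h : ¬ σ.SameCycle x y) {a b : α}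
    (hab : σ.SameCycle a b) : (σ * swap x y).SameCycle a b := by
  have hxy := hw_join_xy h
  have h2 : (σ * swap x y) * swap x y = σ := by
    rw [mul_assoc, swap_mul_self, mul_one]
  rw [← h2] at hab
  exact hw_same_of_mul_swap hxy hab

theorem hw_mul_swap_of_not {σ : Perm α} {x y a b : α}
    (hab : (σ * swap x y).SameCycle a b) :
    σ.SameCycle a b ∨ ((σ.SameCycle x a ∨ σ.SameCycle y a) ∧
      (σ.SameCycle x b ∨ σ.SameCycle y b)) := by
  obtain ⟨n, -, rfl⟩ := hab.exists_pow_eq'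
  clear hab
  induction n with
  | zero => exact Or.inl (Perm.SameCycle.refl _ _)
  | succ n ih =>
    rw [pow_succ', Perm.mul_apply]
    generalize ((σ * swap x y) ^ n) a = z at ih
    rw [Perm.mul_apply]
    simp only [Perm.sameCycle_apply_right]
    rcases eq_or_ne z x with rfl | hx
    · rw [swap_apply_left]
      rcases ih with ih | ih
      · exact Or.inr ⟨Or.inl ih.symm, Or.inr (Perm.SameCycle.refl _ _)⟩
      · exact Or.inr ⟨ih.1, Or.inr (Perm.SameCycle.refl _ _)⟩
    rcases eq_or_ne z y with rfl | hy
    · rw [swap_apply_right]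
      rcases ih with ih | ih
      · exact Or.inr ⟨Or.inr ih.symm, Or.inl (Perm.SameCycle.refl _ _)⟩
      · exact Or.inr ⟨ih.1, Or.inl (Perm.SameCycle.refl _ _)⟩
    rw [swap_apply_of_ne_of_ne hx hy]
    exact ih

theorem hw_C_join_mem {σ : Perm α} {x y z : α} (h : ¬ σ.SameCycle x y)
    (hz : σ.SameCycle x z ∨ σ.SameCycle y z) :
    hwC (σ * swap x y) z = hwC σ x ∪ hwC σ y := by
  have hxy := hw_join_xy h
  ext w
  rw [mem_union, hw_mem_C, hw_mem_C, hw_mem_C]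
  constructor
  · intro hw
    rcases hw_mul_swap_of_not hw with h1 | h1
    · exact hz.imp (fun h2 => h2.trans h1) (fun h2 => h2.trans h1)
    · exact h1.2
  · intro hw
    have h1 : (σ * swap x y).SameCycle x z := by
      rcases hz with h2 | h2
      · exact hw_join_mono h h2
      · exact hxy.trans (hw_join_mono h h2)
    have h2 : (σ * swap x y).SameCycle x w := by
      rcases hw with h2 | h2
      · exact hw_join_mono h h2
      · exact hxy.trans (hw_join_mono h h2)
    exact h1.symm.trans h2

theorem hw_C_join_not_mem {σ : Perm α} {x y z : α} (h : ¬ σ.SameCycle x y)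
    (hz : ¬ (σ.SameCycle x z ∨ σ.SameCycle y z)) :
    hwC (σ * swap x y) z = hwC σ z := by
  ext w
  rw [hw_mem_C, hw_mem_C]
  constructor
  · intro hw
    rcases hw_mul_swap_of_not hw with h1 | h1
    · exact h1
    · exact absurd h1.1 hz
  · exact hw_join_mono h

theorem hw_P_join {σ : Perm α} {x y : α} (h : ¬ σ.SameCycle x y) :
    hwP (σ * swap x y) =
      insert (hwC σ x ∪ hwC σ y) (((hwP σ).erase (hwC σ x)).erase (hwC σ y)) := by
  ext p
  rw [mem_insert, mem_erase, mem_erase]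
  constructor
  · intro hp
    obtain ⟨z, -, rfl⟩ := mem_image.1 hp
    by_cases hz : σ.SameCycle x z ∨ σ.SameCycle y z
    · exact Or.inl (hw_C_join_mem h hz)
    · right
      rw [hw_C_join_not_mem h hz]
      push Not at hz
      refine ⟨fun h1 => hz.2 (hw_C_eq_iff.1 h1).symm, fun h1 => hz.1 (hw_C_eq_iff.1 h1).symm,
        hw_C_mem_P σ z⟩
  · rintro (rfl | ⟨h1, h2, h3⟩)
    · rw [← hw_C_join_mem h (Or.inl (Perm.SameCycle.refl σ x))]
      exact hw_C_mem_P _ _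
    · obtain ⟨z, -, rfl⟩ := mem_image.1 h3
      rw [← hw_C_join_not_mem h (z := z)]
      · exact hw_C_mem_P _ _
      · rintro (h4 | h4)
        · exact h2 (hw_C_eq_iff.2 h4.symm)
        · exact h1 (hw_C_eq_iff.2 h4.symm)

theorem hw_union_not_mem {σ : Perm α} {x y : α} (h : ¬ σ.SameCycle x y) :
    hwC σ x ∪ hwC σ y ∉ ((hwP σ).erase (hwC σ x)).erase (hwC σ y) := by
  intro hm
  obtain ⟨z, -, hz⟩ := mem_image.1 (mem_of_mem_erase (mem_of_mem_erase hm))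
  have h1 : x ∈ hwC σ z := by rw [hz]; exact mem_union_left _ (hw_self_mem σ x)
  have h2 : y ∈ hwC σ z := by rw [hz]; exact mem_union_right _ (hw_self_mem σ y)
  exact h ((hw_mem_C.1 h1).symm.trans (hw_mem_C.1 h2))

theorem hw_y_mem_erase {σ : Perm α} {x y : α} (h : ¬ σ.SameCycle x y) :
    hwC σ y ∈ (hwP σ).erase (hwC σ x) :=
  mem_erase.2 ⟨fun h1 => h (hw_C_eq_iff.1 h1).symm, hw_C_mem_P σ y⟩

theorem hw_card_join {σ : Perm α} {x y : α} (h : ¬ σ.SameCycle x y) :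
    (hwP (σ * swap x y)).card + 1 = (hwP σ).card := by
  rw [hw_P_join h, card_insert_of_notMem (hw_union_not_mem h),
    card_erase_add_one (hw_y_mem_erase h), card_erase_add_one (hw_C_mem_P σ x)]

theorem hw_W_join {σ : Perm α} {x y : α} (h : ¬ σ.SameCycle x y) :
    hwW (σ * swap x y) =
      hwW σ * (((hwC σ x).card : ℚ)⁻¹ + ((hwC σ y).card : ℚ)⁻¹) := by
  have hd : Disjoint (hwC σ x) (hwC σ y) := by
    rw [disjoint_left]
    intro z h1 h2
    exact h ((hw_mem_C.1 h1).trans (hw_mem_C.1 h2).symm)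
  unfold hwW
  rw [hw_P_join h, prod_insert (hw_union_not_mem h), card_union_of_disjoint hd,
    ← mul_prod_erase _ _ (hw_C_mem_P σ x), ← mul_prod_erase _ _ (hw_y_mem_erase h)]
  have h1 := hw_card_pos σ x
  have h2 := hw_card_pos σ y
  push_cast
  field_simp
  ring

open Classical in
/-- Sum over ordered pairs versus sum over swaps. -/
theorem hw_sum_swap (f : Perm α → ℚ) :
    ∑ p ∈ (univ : Finset (α × α)).filter (fun p => p.1 ≠ p.2), f (swap p.1 p.2) =
      2 * ∑ s ∈ (univ : Finset (Perm α)).filter (fun s => s.IsSwap), f s := by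
  rw [← sum_fiberwise_of_maps_to (t := (univ : Finset (Perm α)).filter (fun s => s.IsSwap))
    (g := fun p : α × α => swap p.1 p.2), mul_sum]
  · refine sum_congr rfl fun s hs => ?_
    obtain ⟨a, b, hab, rfl⟩ := (mem_filter.1 hs).2
    have h1 : (((univ : Finset (α × α)).filter (fun p => p.1 ≠ p.2)).filter
        (fun p => swap p.1 p.2 = swap a b)) = {(a, b), (b, a)} := by
      ext ⟨x, y⟩
      simp only [mem_filter, mem_univ, true_and, mem_insert, mem_singleton, Prod.mk.injEq]
      constructor
      · rintro ⟨h1, h2⟩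
        have h3 : swap a b x = y := by rw [← h2, swap_apply_left]
        rcases eq_or_ne x a with rfl | hx
        · rw [swap_apply_left] at h3
          exact Or.inl ⟨rfl, h3.symm⟩
        rcases eq_or_ne x b with rfl | hy
        · rw [swap_apply_right] at h3
          exact Or.inr ⟨rfl, h3.symm⟩
        rw [swap_apply_of_ne_of_ne hx hy] at h3
        exact absurd h3 h1
      · rintro (⟨rfl, rfl⟩ | ⟨rfl, rfl⟩)
        · exact ⟨hab, rfl⟩
        · exact ⟨hab.symm, swap_comm _ _⟩
    rw [sum_congr rfl (g := fun _ => f (swap a b)) (by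
      intro p hp
      rw [(mem_filter.1 hp).2]), h1, sum_const, card_pair]
    · simp
    · intro h
      exact hab (Prod.mk.inj h).1
  · rintro ⟨x, y⟩ hp
    rw [mem_filter]
    exact ⟨mem_univ _, x, y, (mem_filter.1 hp).2, rfl⟩

open Classical in
/-- number of ways to complete `σ` to a full cycle by `n` transpositions -/
noncomputable def hwF : ℕ → Perm α → ℚ
  | 0, σ => if ∀ a b, σ.SameCycle a b then 1 else 0
  | n + 1, σ => ∑ s ∈ (univ : Finset (Perm α)).filter (fun s => s.IsSwap), hwF n (σ * s)

open Classical in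
theorem hwF_zero (n : ℕ) : ∀ σ : Perm α, n + 1 < (hwP σ).card → hwF n σ = 0 := by
  induction n with
  | zero =>
    intro σ h
    rw [hwF, if_neg]
    intro hall
    obtain ⟨p, hp, q, hq, hpq⟩ := one_lt_card.1 h
    obtain ⟨x, -, rfl⟩ := mem_image.1 hp
    obtain ⟨y, -, rfl⟩ := mem_image.1 hq
    exact hpq (hw_C_eq_iff.2 (hall x y))
  | succ n ih =>
    intro σ h
    rw [hwF]
    refine sum_eq_zero fun s hs => ih _ ?_
    obtain ⟨a, b, hab, rfl⟩ := (mem_filter.1 hs).2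
    by_cases hs : σ.SameCycle a b
    · have := hw_card_same hs
      omega
    · have := hw_card_join hs
      omega

open Classical in
theorem hwF_eq (n : ℕ) : ∀ σ : Perm α, n + 1 = (hwP σ).card →
    (Fintype.card α : ℚ) * hwF n σ = hwW σ * (Fintype.card α : ℚ) ^ n * (n.factorial : ℚ) := by
  induction n with
  | zero =>
    intro σ h
    obtain ⟨p, hp⟩ := card_eq_one.1 h.symm
    have hall : ∀ x, hwC σ x = p := fun x => by
      have := hw_C_mem_P σ x
      rw [hp] at this
      exact mem_singleton.1 this
    have hs : ∀ a b, σ.SameCycle a b := fun a b =>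
      hw_C_eq_iff.1 ((hall a).trans (hall b).symm)
    have hpu : p = univ := by
      have : p ∈ hwP σ := by rw [hp]; exact mem_singleton_self p
      obtain ⟨x, -, rfl⟩ := mem_image.1 this
      ext y
      simp [hw_mem_C, hs]
    rw [hwF, if_pos hs, hwW, hp, prod_singleton, hpu]
    simp
  | succ n ih =>
    intro σ h
    set k : ℚ := (Fintype.card α : ℚ) with hk
    have key : ∀ p : α × α, (if p.1 ≠ p.2 then k * hwF n (σ * swap p.1 p.2) else 0) =
        hwW σ * k ^ n * (n.factorial : ℚ) * (if p.2 ∈ hwC σ p.1 then 0 else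
          (((hwC σ p.1).card : ℚ)⁻¹ + ((hwC σ p.2).card : ℚ)⁻¹)) := by
      rintro ⟨x, y⟩
      by_cases hs : σ.SameCycle x y
      · rw [if_pos (hw_mem_C.2 hs), mul_zero, ite_eq_right_iff]
        intro _
        rw [hwF_zero, mul_zero]
        have := hw_card_same hs
        simp only
        omega
      · have hne : x ≠ y := by
          rintro rfl
          exact hs (Perm.SameCycle.refl _ _)
        rw [if_pos hne, if_neg (fun h1 => hs (hw_mem_C.1 h1)), ih, hw_W_join hs]
        · ring
        · have := hw_card_join hs
          simp only
          omega
    have h2 : 2 * (k * hwF (n + 1) σ) = ∑ p : α × α,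
        (if p.1 ≠ p.2 then k * hwF n (σ * swap p.1 p.2) else 0) := by
      rw [hwF, ← sum_filter, ← mul_sum, hw_sum_swap (fun s => hwF n (σ * s))]
      ring
    have h3 : ∀ g : α → ℚ, ∑ x, ∑ y, (if y ∈ hwC σ x then 0 else g x) =
        ∑ x, (k - (hwC σ x).card) * g x := by
      intro g
      refine sum_congr rfl fun x _ => ?_
      have : ∀ y, (if y ∈ hwC σ x then 0 else g x) = g x - (if y ∈ hwC σ x then g x else 0) := by
        intro y; split_ifs <;> simp
      rw [sum_congr rfl (fun y _ => this y), sum_sub_distrib, ← sum_filter]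
      simp [hk]
      ring
    have h4 : ∑ x, (k - (hwC σ x).card) * ((hwC σ x).card : ℚ)⁻¹ = k * (n + 1) := by
      have : ∀ x, (k - (hwC σ x).card) * ((hwC σ x).card : ℚ)⁻¹ =
          k * ((hwC σ x).card : ℚ)⁻¹ - 1 := by
        intro x
        have := hw_card_pos σ x
        field_simp
      rw [sum_congr rfl (fun y _ => this y), sum_sub_distrib, ← mul_sum, hw_sum_inv, ← h]
      simp [← hk]
      ring
    have h5 : ∑ p : α × α, (if p.2 ∈ hwC σ p.1 then 0 else
          (((hwC σ p.1).card : ℚ)⁻¹ + ((hwC σ p.2).card : ℚ)⁻¹)) = 2 * (k * (n + 1)) := by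
      have hsplit : ∀ p : α × α, (if p.2 ∈ hwC σ p.1 then 0 else
          (((hwC σ p.1).card : ℚ)⁻¹ + ((hwC σ p.2).card : ℚ)⁻¹)) =
          (if p.2 ∈ hwC σ p.1 then 0 else ((hwC σ p.1).card : ℚ)⁻¹) +
          (if p.1 ∈ hwC σ p.2 then 0 else ((hwC σ p.2).card : ℚ)⁻¹) := by
        intro p
        have : p.1 ∈ hwC σ p.2 ↔ p.2 ∈ hwC σ p.1 := by
          rw [hw_mem_C, hw_mem_C, Perm.sameCycle_comm]
        simp only [this]
        split_ifs <;> simp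
      rw [sum_congr rfl (fun p _ => hsplit p), sum_add_distrib, Fintype.sum_prod_type,
        Fintype.sum_prod_type_right, h3 (fun x => ((hwC σ x).card : ℚ)⁻¹), h4]
      ring
    rw [sum_congr rfl (fun p _ => key p), ← mul_sum, h5] at h2
    have h6 : k * hwF (n + 1) σ = hwW σ * k ^ n * (n.factorial : ℚ) * (k * (n + 1)) := by
      linarith
    rw [h6, Nat.factorial_succ]
    push_cast
    ring

open Classical in
theorem hwF_card (n : ℕ) : ∀ σ : Perm α, hwF n σ = ∑ t : Fin n → Perm α,
    if (∀ i, (t i).IsSwap) ∧ ∀ a b, (σ * (List.ofFn t).prod).SameCycle a b then (1 : ℚ) else 0 := by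
  induction n with
  | zero =>
    intro σ
    simp [hwF]
  | succ n ih =>
    intro σ
    rw [hwF, ← (Fin.consEquiv (fun _ => Perm α)).sum_comp, Fintype.sum_prod_type, sum_filter]
    refine sum_congr rfl fun s _ => ?_
    simp only [Fin.consEquiv_apply, Fin.forall_fin_succ, Fin.cons_zero, Fin.cons_succ,
      List.ofFn_succ, List.prod_cons]
    split_ifs with hs
    · rw [ih]
      simp only [hs, true_and, mul_assoc]
    · simp [hs]

theorem hw_parts_iff {k : ℕ} (hk : 1 ≤ k) (σ : Perm (Fin k)) :
    (Perm.partition σ).parts = {k} ↔ ∀ a b, σ.SameCycle a b := by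
  rcases hk.eq_or_lt with rfl | hk
  · constructor
    · intro _ a b
      rw [Subsingleton.elim a b]
    · intro _
      have : σ = 1 := Subsingleton.elim _ _
      subst this
      rw [Perm.parts_partition]
      simp
  · rw [Perm.parts_partition]
    constructor
    · intro h a b
      have h0 : Fintype.card (Fin k) - σ.support.card = 0 := by
        by_contra hne
        have : 1 ∈ σ.cycleType + Multiset.replicate (Fintype.card (Fin k) - σ.support.card) 1 :=
          Multiset.mem_add.2 (Or.inr (Multiset.mem_replicate.2 ⟨hne, rfl⟩))
        rw [h, Multiset.mem_singleton] at this
        omega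
      rw [h0, Multiset.replicate_zero, add_zero] at h
      have hc : σ.IsCycle := by
        rw [← Perm.card_cycleType_eq_one, h, Multiset.card_singleton]
      have hsup : σ.support = univ := by
        rw [← Finset.card_eq_iff_eq_univ]
        have := card_le_univ σ.support
        omega
      have hm : ∀ z, σ z ≠ z := fun z => by
        rw [← Perm.mem_support, hsup]; exact mem_univ z
      exact hc.sameCycle (hm a) (hm b)
    · intro h
      have : Nontrivial (Fin k) := Fin.nontrivial_iff_two_le.2 hk
      have hm : ∀ z, σ z ≠ z := by
        intro z hz
        obtain ⟨w, hw⟩ := exists_ne z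
        obtain ⟨i, hi⟩ := h z w
        rw [Perm.zpow_apply_eq_self_of_apply_eq_self hz] at hi
        exact hw hi.symm
      have hsup : σ.support = univ := by
        ext z
        simp [hm z]
      have hc : σ.IsCycle := ⟨⟨0, by omega⟩, hm _, fun y _ => h _ y⟩
      rw [hc.cycleType, hsup]
      simp

theorem hw_P_one : (hwP (1 : Perm α)) = univ.image (fun x : α => ({x} : Finset α)) := by
  unfold hwP
  congr 1
  ext x y
  simp [hw_mem_C, eq_comm]

theorem hw_sum_card {β : Type*} [Fintype β] (p : β → Prop)
    (inst : ∀ x, Decidable (p x)) :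
    ∑ x, (if p x then (1 : ℚ) else 0) = (Nat.card {x // p x} : ℚ) := by
  rw [Finset.sum_boole, ← Fintype.card_subtype, ← Nat.card_eq_fintype_card]

theorem hw_count (k : ℕ) (hk : 1 ≤ k) :
    (hurwitzCount k (k - 1) {k} : ℚ) = hwF (k - 1) (1 : Perm (Fin k)) := by
  rw [hwF_card, hurwitzCount]
  refine Eq.trans ?_ (hw_sum_card _ _).symm
  congr 1
  refine Nat.card_congr ⟨fun p => ⟨p.1.1, p.2.1, ?_⟩,
    fun t => ⟨(t.1, ((List.ofFn t.1).prod)⁻¹), t.2.1, ?_, ?_, ?_⟩, ?_, ?_⟩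
  · obtain ⟨⟨t, τ⟩, h1, h2, h3, h4⟩ := p
    have : (List.ofFn t).prod = τ⁻¹ := eq_inv_of_mul_eq_one_left h3
    simp only [this, one_mul, Perm.sameCycle_inv]
    exact (hw_parts_iff hk τ).1 h2
  · rw [hw_parts_iff hk]
    simp only [Perm.sameCycle_inv]
    simpa using t.2.2
  · simp
  · intro a b
    have h := t.2.2 a b
    rw [one_mul, ← Perm.sameCycle_inv] at h
    obtain ⟨i, hi⟩ := h
    exact ⟨((List.ofFn t.1).prod⁻¹) ^ i, Subgroup.zpow_mem _ (Subgroup.subset_closure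
      (Set.mem_union_right _ (Set.mem_singleton _))) i, hi⟩
  · rintro ⟨⟨t, τ⟩, h1, h2, h3, h4⟩
    have : (List.ofFn t).prod⁻¹ = τ := inv_eq_of_mul_eq_one_right h3
    simp [this]
  · rintro ⟨t, h⟩
    rfl

end HurwitzAux

/-- `h_{0,(k)} = k^{k-3}` for every positive integer `k`. -/
theorem hurwitz_genus_zero_one_part (k : ℕ) (hk : 1 ≤ k) :
    hurwitzNumber 0 {k} = (k : ℚ) ^ ((k : ℤ) - 3) := by
  have h0 : 2 * 0 + Multiset.card ({k} : Multiset ℕ) + ({k} : Multiset ℕ).sum - 2 = k - 1 := by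
    simp; omega
  have hinj : Function.Injective (fun x : Fin k => ({x} : Finset (Fin k))) :=
    Finset.singleton_injective
  have hc : (hwP (1 : Perm (Fin k))).card = k := by
    rw [hw_P_one, Finset.card_image_of_injective _ hinj]; simp
  have hW : hwW (1 : Perm (Fin k)) = 1 := by
    rw [hwW, hw_P_one, Finset.prod_image (fun _ _ _ _ h => hinj h)]; simp
  unfold hurwitzNumber
  rw [h0, Multiset.sum_singleton, hw_count k hk]
  have key := hwF_eq (k - 1) (1 : Perm (Fin k)) (by omega)
  rw [hW, Fintype.card_fin, one_mul] at key
  obtain ⟨n, rfl⟩ : ∃ n, k = n + 1 := ⟨k - 1, by omega⟩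
  rw [Nat.add_sub_cancel] at key ⊢
  have hk0 : ((n + 1 : ℕ) : ℚ) ≠ 0 := by positivity
  have hn0 : (n.factorial : ℚ) ≠ 0 := by positivity
  have e : (((n + 1 : ℕ) : ℤ) - 3) = (n : ℤ) - 2 := by push_cast; ring
  rw [e, zpow_sub₀ hk0, zpow_natCast, Nat.factorial_succ, Nat.cast_mul]
  rw [div_eq_div_iff (by positivity) (by positivity)]
  have e2 : ((n + 1 : ℕ) : ℚ) ^ (2 : ℤ) = ((n + 1 : ℕ) : ℚ) * ((n + 1 : ℕ) : ℚ) := by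
    rw [zpow_ofNat, sq]
  rw [e2]
  linear_combination ((n + 1 : ℕ) : ℚ) * key
end

section
/- For positive integers μ1, μ2 and complex x1, x2 with |x1|, |x2| < 1/e, the identity Σ_{μ1,μ2 ≥ 1} (1/(μ1+μ2)) (μ1^{μ1}/μ1!) (μ2^{μ2}/μ2!) x1^{μ1} x2^{μ2} = log( Σ_{k≥1} (k^{k-1}/k!) (x1^k - x2^k)/(x1 - x2) ) - Σ_{k≥1}(k^{k-1}/k!)x1^k - Σ_{k≥1}(k^{k-1}/k!)x2^k holds (where for x1 = x2 the difference quotient is interpreted as the derivative). -/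
open scoped Nat

namespace H02

/-- Coefficients of the tree function. -/
noncomputable def a (k : ℕ) : ℂ := ((k + 1 : ℂ)) ^ k / ((k + 1)! : ℂ)

noncomputable def T (x : ℂ) : ℂ := ∑' k : ℕ, a k * x ^ (k + 1)

noncomputable def D (x : ℂ) : ℂ := ∑' k : ℕ, (k + 1 : ℂ) * a k * x ^ k

lemma norm_a (k : ℕ) : ‖a k‖ = ((k + 1 : ℝ)) ^ k / ((k + 1)! : ℝ) := by
  have : a k = (((((k + 1 : ℝ)) ^ k / ((k + 1)! : ℝ)) : ℝ) : ℂ) := by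
    unfold a; push_cast; rfl
  rw [this, Complex.norm_real, Real.norm_of_nonneg (by positivity)]

lemma norm_b (k : ℕ) : ‖(k + 1 : ℂ) * a k‖ = (k + 1) * ‖a k‖ := by
  rw [norm_mul]
  congr 1
  have : (k + 1 : ℂ) = ((k + 1 : ℝ) : ℂ) := by push_cast; rfl
  rw [this, Complex.norm_real, Real.norm_of_nonneg (by positivity)]

lemma norm_b_le (k : ℕ) : ‖(k + 1 : ℂ) * a k‖ ≤ Real.exp 1 ^ (k + 1) := by
  rw [norm_b, norm_a, ← Real.exp_nat_mul]
  have := Real.pow_div_factorial_le_exp (x := (k + 1 : ℝ)) (by positivity) (k + 1)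
  calc _ = (k + 1 : ℝ) ^ (k + 1) / (k + 1)! := by ring
    _ ≤ _ := this
    _ = _ := by push_cast; simp

lemma norm_a_le_b (k : ℕ) : ‖a k‖ ≤ ‖(k + 1 : ℂ) * a k‖ := by
  rw [norm_b]
  nlinarith [norm_nonneg (a k), mul_nonneg (Nat.cast_nonneg (α := ℝ) k) (norm_nonneg (a k))]

lemma summable_b {r : ℝ} (h0 : 0 ≤ r) (h : r < (Real.exp 1)⁻¹) :
    Summable fun k : ℕ => ‖(k + 1 : ℂ) * a k‖ * r ^ k := by
  have he : 0 < Real.exp 1 := Real.exp_pos 1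
  have h1 : Real.exp 1 * r < 1 := by
    calc _ < Real.exp 1 * (Real.exp 1)⁻¹ := by gcongr
      _ = 1 := mul_inv_cancel₀ he.ne'
  refine Summable.of_nonneg_of_le (fun k => by positivity) (fun k => ?_)
    ((summable_geometric_of_lt_one (by positivity) h1).mul_left (Real.exp 1))
  calc _ ≤ Real.exp 1 ^ (k + 1) * r ^ k := by gcongr; exact norm_b_le k
    _ = _ := by rw [mul_pow]; ring

lemma summable_a {r : ℝ} (h0 : 0 ≤ r) (h : r < (Real.exp 1)⁻¹) :
    Summable fun k : ℕ => ‖a k‖ * r ^ (k + 1) := by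
  refine Summable.of_nonneg_of_le (fun k => by positivity) (fun k => ?_)
    ((summable_b h0 h).mul_left r)
  calc _ ≤ ‖(k + 1 : ℂ) * a k‖ * r ^ (k + 1) := by gcongr; exact norm_a_le_b k
    _ = _ := by ring

lemma summable_T {x : ℂ} (h : ‖x‖ < (Real.exp 1)⁻¹) : Summable fun k : ℕ => a k * x ^ (k + 1) := by
  apply Summable.of_norm
  simpa [norm_mul, norm_pow] using summable_a (norm_nonneg x) h

lemma T_zero : T 0 = 0 := by simp [T]

lemma hasDerivAt_T {x : ℂ} (h : ‖x‖ < (Real.exp 1)⁻¹) : HasDerivAt T (D x) x := by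
  obtain ⟨r, hr1, hr2⟩ := exists_between h
  have hr0 : 0 < r := (norm_nonneg x).trans_lt hr1
  refine hasDerivAt_tsum_of_isPreconnected (t := Metric.ball 0 r) (y₀ := 0)
    (g := fun k x => a k * x ^ (k + 1)) (g' := fun k x => (k + 1 : ℂ) * a k * x ^ k)
    (summable_b hr0.le hr2) Metric.isOpen_ball
    (convex_ball _ _).isPreconnected ?_ ?_ (by simpa using hr0) (by simp) (by simpa using hr1)
  · intro n y _
    have := (hasDerivAt_pow (n + 1) y).const_mul (a n)
    convert! this using 1
    push_cast; ring
  · intro n y hy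
    have : ‖y‖ ≤ r := by simpa using (Metric.mem_ball.1 hy).le
    rw [norm_mul _ (y ^ n), norm_pow]
    gcongr

lemma coef_sum (n : ℕ) (w : ℂ) :
    ∑ p ∈ Finset.HasAntidiagonal.antidiagonal n, a p.1 * w ^ (p.1 + 1) *
      ((-((p.1 + 1 : ℂ) * w)) ^ p.2 / (p.2 ! : ℂ)) = if n = 0 then w else 0 := by
  split_ifs with hn
  · subst hn; simp [a]
  have key := congrFun (fwdDiff_iter_pow_eq_zero_of_lt (R := ℂ) (Nat.lt_succ_self n)) 0
  rw [fwdDiff_iter_eq_sum_shift, Finset.sum_range_succ'] at key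
  simp only [Pi.zero_apply] at key
  rw [Finset.Nat.sum_antidiagonal_eq_sum_range_succ_mk]
  have : ∀ k ∈ Finset.range (n + 1), a k * w ^ (k + 1) *
      ((-((k + 1 : ℂ) * w)) ^ (n - k) / ((n - k)! : ℂ)) =
      (w ^ (n + 1) / (n + 1)!) * (((-1 : ℤ) ^ (n.succ - (k + 1)) * (n.succ.choose (k + 1) : ℕ)) • ((0 : ℂ) + (k + 1) • (1 : ℂ)) ^ n) := by
    intro k hk
    have hk' : k ≤ n := Nat.lt_succ_iff.1 (Finset.mem_range.1 hk)
    obtain ⟨j, rfl⟩ := Nat.exists_eq_add_of_le hk'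
    have hc : (((k + j).succ.choose (k + 1) : ℕ) : ℂ) = (k + j + 1)! / ((k + 1)! * j !) := by
      rw [Nat.cast_choose ℂ (by omega)]
      congr 3
      congr 1
      omega
    have e1 : (k + j).succ - (k + 1) = j := by omega
    have e2 : k + j - k = j := by omega
    rw [e1, e2]
    simp only [zsmul_eq_mul, nsmul_eq_mul]
    push_cast
    rw [hc]
    have := Nat.factorial_ne_zero
    have f1 : ((k + j + 1)! : ℂ) ≠ 0 := by exact_mod_cast this _
    have f2 : ((k + 1)! : ℂ) ≠ 0 := by exact_mod_cast this _
    have f3 : ((j)! : ℂ) ≠ 0 := by exact_mod_cast this _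
    unfold a
    field_simp
    rw [show -(((k:ℂ) + 1) * w) = (-1) * w * (k + 1) by ring, zero_add, mul_pow, mul_pow]
    ring
  rw [Finset.sum_congr rfl this, ← Finset.mul_sum]
  simp only [zero_smul, add_zero, zero_pow hn, smul_zero] at key
  rw [key, mul_zero]

lemma T_comp {w : ℂ} (h : ‖w‖ * Real.exp ‖w‖ < (Real.exp 1)⁻¹) :
    T (w * Complex.exp (-w)) = w := by
  have hs0 : ∀ k : ℕ, HasSum (fun j : ℕ => a k * w ^ (k + 1) *
      ((-((k + 1 : ℂ) * w)) ^ j / (j ! : ℂ))) (a k * (w * Complex.exp (-w)) ^ (k + 1)) := by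
    intro k
    have := (NormedSpace.expSeries_div_hasSum_exp (𝔸 := ℂ) (-((k + 1 : ℂ) * w))).mul_left
      (a k * w ^ (k + 1))
    convert! this using 1
    rw [← Complex.exp_eq_exp_ℂ, mul_pow, ← Complex.exp_nat_mul]
    push_cast
    ring_nf
  have hn0 : ∀ k : ℕ, HasSum (fun j : ℕ => ‖a k * w ^ (k + 1) *
      ((-((k + 1 : ℂ) * w)) ^ j / (j ! : ℂ))‖) (‖a k‖ * (‖w‖ * Real.exp ‖w‖) ^ (k + 1)) := by
    intro k
    have := (NormedSpace.expSeries_div_hasSum_exp (𝔸 := ℝ) ((k + 1 : ℝ) * ‖w‖)).mul_left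
      (‖a k‖ * ‖w‖ ^ (k + 1))
    convert! this using 1
    · ext j
      have : ‖(k + 1 : ℂ)‖ = k + 1 := by
        have : (k + 1 : ℂ) = ((k + 1 : ℝ) : ℂ) := by push_cast; rfl
        rw [this, Complex.norm_real, Real.norm_of_nonneg (by positivity)]
      simp [norm_pow, this]
    · rw [← Real.exp_eq_exp_ℝ, mul_pow, ← Real.exp_nat_mul]
      push_cast
      ring_nf
  have hsum : Summable (fun p : ℕ × ℕ => a p.1 * w ^ (p.1 + 1) *
      ((-((p.1 + 1 : ℂ) * w)) ^ p.2 / (p.2 ! : ℂ))) := by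
    apply Summable.of_norm
    rw [summable_prod_of_nonneg (fun _ => norm_nonneg _)]
    refine ⟨fun k => (hn0 k).summable, ?_⟩
    simp_rw [fun k => (hn0 k).tsum_eq]
    exact summable_a (by positivity) h
  have h1 : ∑' p : ℕ × ℕ, a p.1 * w ^ (p.1 + 1) *
      ((-((p.1 + 1 : ℂ) * w)) ^ p.2 / (p.2 ! : ℂ)) = T (w * Complex.exp (-w)) := by
    rw [hsum.tsum_prod' (fun k => (hs0 k).summable)]
    exact tsum_congr fun k => (hs0 k).tsum_eq
  have hsum' := Finset.HasAntidiagonal.sigmaAntidiagonalEquivProd.summable_iff.mpr hsum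
  have h2 := Summable.tsum_sigma' (fun n => (hasSum_fintype _).summable) hsum'
  simp only [Function.comp_apply] at h2
  rw [← h1, ← Finset.HasAntidiagonal.sigmaAntidiagonalEquivProd.tsum_eq, h2]
  rw [tsum_eq_single 0]
  · simp [a]
  · intro n hn
    rw [tsum_fintype]
    simp only [Finset.HasAntidiagonal.sigmaAntidiagonalEquivProd_apply]
    rw [Finset.sum_coe_sort (Finset.HasAntidiagonal.antidiagonal n) (fun p => a p.1 * w ^ (p.1 + 1) *
      ((-((p.1 + 1 : ℂ) * w)) ^ p.2 / (p.2 ! : ℂ))), coef_sum, if_neg hn]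

lemma T_eq {x : ℂ} (h : ‖x‖ < (Real.exp 1)⁻¹) : T x * Complex.exp (-T x) = x := by
  have he : 0 < (Real.exp 1)⁻¹ := by positivity
  have hd : DifferentiableOn ℂ T (Metric.ball 0 (Real.exp 1)⁻¹) := fun y hy =>
    (hasDerivAt_T (by simpa using hy)).differentiableAt.differentiableWithinAt
  have hd2 : DifferentiableOn ℂ (fun y => T y * Complex.exp (-T y))
      (Metric.ball 0 (Real.exp 1)⁻¹) := hd.mul hd.neg.cexp
  refine (hd2.analyticOnNhd Metric.isOpen_ball).eqOn_of_preconnected_of_eventuallyEq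
    (g := fun y => y) (differentiableOn_id.analyticOnNhd Metric.isOpen_ball)
    (convex_ball _ _).isPreconnected (z₀ := 0) (by simpa using he) ?_ (by simpa using h)
  have hφ : HasStrictDerivAt (fun w : ℂ => w * Complex.exp (-w)) 1 0 := by
    have := (hasStrictDerivAt_id (0 : ℂ)).mul ((hasStrictDerivAt_id (0 : ℂ)).neg.cexp)
    simpa using! this
  have hm := hφ.map_nhds_eq (by norm_num)
  simp only [zero_mul] at hm
  rw [Filter.EventuallyEq, ← hm, Filter.eventually_map]
  have hc : Filter.Tendsto (fun w : ℂ => ‖w‖ * Real.exp ‖w‖) (nhds 0) (nhds 0) := by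
    have : Continuous (fun w : ℂ => ‖w‖ * Real.exp ‖w‖) := by fun_prop
    simpa using this.tendsto 0
  filter_upwards [hc.eventually_lt_const he] with w hw
  rw [T_comp hw]

lemma norm_T_lt {x : ℂ} (h : ‖x‖ < (Real.exp 1)⁻¹) : ‖T x‖ < 1 := by
  have hreal : ∀ r : ℝ, 0 ≤ r → r < (Real.exp 1)⁻¹ →
      T (r : ℂ) = ((∑' k : ℕ, ‖a k‖ * r ^ (k + 1) : ℝ) : ℂ) := by
    intro r _ _
    rw [Complex.ofReal_tsum, T]
    refine tsum_congr fun k => ?_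
    rw [norm_a, a]
    push_cast
    ring
  have hle : ‖T x‖ ≤ ‖T (‖x‖ : ℂ)‖ := by
    rw [hreal _ (norm_nonneg x) h, Complex.norm_real, Real.norm_of_nonneg
      (tsum_nonneg fun k => by positivity)]
    have hs := summable_a (norm_nonneg x) h
    refine (norm_tsum_le_tsum_norm ?_).trans_eq ?_
    · simpa [norm_mul, norm_pow] using hs
    · simp [norm_mul, norm_pow]
  refine hle.trans_lt ?_
  by_contra! hcon
  have hcont : ContinuousOn (fun r : ℝ => ‖T (r : ℂ)‖) (Set.Icc 0 ‖x‖) := by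
    intro r hr
    have hr' : ‖(r : ℂ)‖ < (Real.exp 1)⁻¹ := by
      rw [Complex.norm_real, Real.norm_of_nonneg hr.1]; exact hr.2.trans_lt h
    exact ((hasDerivAt_T hr').continuousAt.comp
      Complex.continuous_ofReal.continuousAt).norm.continuousWithinAt
  obtain ⟨s, hs, hs1⟩ := intermediate_value_Icc (norm_nonneg x) hcont
    (show (1 : ℝ) ∈ _ from ⟨by simp [T_zero], hcon⟩)
  have hs' : s < (Real.exp 1)⁻¹ := hs.2.trans_lt h
  simp only at hs1
  have h1 : T (s : ℂ) = 1 := by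
    rw [hreal s hs.1 hs'] at hs1 ⊢
    rw [Complex.norm_real, Real.norm_of_nonneg
      (tsum_nonneg fun k => mul_nonneg (norm_nonneg _) (pow_nonneg hs.1 _))] at hs1
    rw [hs1]; simp
  have h2 := T_eq (x := (s : ℂ)) (by
    rw [Complex.norm_real, Real.norm_of_nonneg hs.1]; exact hs')
  rw [h1, one_mul] at h2
  have h3 : Real.exp (-1) = s := by
    have h4 := congrArg Complex.re h2
    rwa [Complex.ofReal_re, show (-1 : ℂ) = ((-1 : ℝ) : ℂ) by push_cast; rfl, Complex.exp_ofReal_re] at h4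
  rw [Real.exp_neg] at h3
  exact hs'.ne h3.symm

lemma one_sub_T_ne {x : ℂ} (h : ‖x‖ < (Real.exp 1)⁻¹) : 1 - T x ≠ 0 := by
  intro h0
  have := norm_T_lt h
  rw [← sub_eq_zero.1 h0] at this
  simp at this

lemma D_eq {x : ℂ} (h : ‖x‖ < (Real.exp 1)⁻¹) : D x = Complex.exp (T x) / (1 - T x) := by
  have h1 := (hasDerivAt_T h).mul (hasDerivAt_T h).neg.cexp
  have h2 : HasDerivAt (fun y => T y * Complex.exp (-T y)) 1 x := by
    refine (hasDerivAt_id x).congr_of_eventuallyEq ?_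
    have : ∀ᶠ y in nhds x, ‖y‖ < (Real.exp 1)⁻¹ :=
      continuous_norm.continuousAt.eventually_lt_const h
    filter_upwards [this] with y hy using T_eq hy
  have h3 := h1.unique h2
  rw [eq_div_iff (one_sub_T_ne h)]
  have h4 : Complex.exp (T x) * Complex.exp (-T x) = 1 := by
    rw [← Complex.exp_add]; simp
  simp only [Pi.neg_apply] at h3
  linear_combination Complex.exp (T x) * h3 - D x * (1 - T x) * h4

lemma x_mul_D {x : ℂ} (h : ‖x‖ < (Real.exp 1)⁻¹) : x * D x = T x / (1 - T x) := by
  have h4 : Complex.exp (T x) * Complex.exp (-T x) = 1 := by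
    rw [← Complex.exp_add]; simp
  have := one_sub_T_ne h
  rw [D_eq h]
  nth_rewrite 1 [← T_eq h]
  field_simp
  linear_combination T x * h4

lemma re_D_pos {x : ℂ} (h : ‖x‖ < (Real.exp 1)⁻¹) : 0 < (D x).re := by
  have h1 := norm_T_lt h
  have h2 : ‖T x‖ ^ 2 < Real.exp (2 * (T x).re - 2) := by
    have : ‖T x‖ * Real.exp (-(T x).re) < Real.exp (-1) := by
      rw [Real.exp_neg 1]
      have e : ‖T x * Complex.exp (-T x)‖ = ‖x‖ := by rw [T_eq h]
      rw [norm_mul, Complex.norm_exp] at e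
      rw [Complex.neg_re] at e
      rwa [e]
    have h3 : ‖T x‖ < Real.exp ((T x).re - 1) := by
      have := mul_lt_mul_of_pos_right this (Real.exp_pos (T x).re)
      rw [mul_assoc, ← Real.exp_add, ← Real.exp_add] at this
      simp only [neg_add_cancel, Real.exp_zero, mul_one] at this
      rwa [neg_add_eq_sub] at this
    calc _ < Real.exp ((T x).re - 1) ^ 2 := by gcongr
      _ = _ := by rw [← Real.exp_nat_mul]; push_cast; ring_nf
  rw [D_eq h]
  have hne := one_sub_T_ne h
  generalize T x = t at *
  have hre : t.re < 1 := (Complex.re_le_norm t).trans_lt h1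
  have hb : |t.im| < 1 := (Complex.abs_im_le_norm t).trans_lt h1
  rw [Complex.sq_norm, Complex.normSq_apply] at h2
  have : (Complex.exp t / (1 - t)).re =
      Real.exp t.re * ((1 - t.re) * Real.cos t.im - t.im * Real.sin t.im) / Complex.normSq (1 - t) := by
    rw [Complex.div_re, Complex.exp_re, Complex.exp_im]
    simp
    ring
  rw [this]
  refine div_pos (mul_pos (Real.exp_pos _) ?_) (Complex.normSq_pos.2 hne)
  clear this hne h1 h
  obtain ⟨u, hu⟩ : ∃ u, u = 1 - t.re := ⟨_, rfl⟩
  have hre' : t.re = 1 - u := by linarith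
  rw [← hu]
  rw [hre'] at h2
  have hu0 : 0 < u := by linarith
  generalize t.im = b at *
  have hcos : 1 - b ^ 2 / 2 ≤ Real.cos b := Real.one_sub_sq_div_two_le_cos
  have hsin : b * Real.sin b ≤ b ^ 2 := by
    have : |b * Real.sin b| ≤ |b| * |b| := by
      rw [abs_mul]; exact mul_le_mul_of_nonneg_left Real.abs_sin_le_abs (abs_nonneg b)
    rw [abs_mul_abs_self] at this
    nlinarith [le_abs_self (b * Real.sin b)]
  have hexp : Real.exp (2 * (1 - u) - 2) = (Real.exp (2 * u))⁻¹ := by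
    rw [← Real.exp_neg]; ring_nf
  rw [hexp] at h2
  have hq := Real.quadratic_le_exp_of_nonneg (x := 2 * u) (by linarith)
  have h5 : b ^ 2 * (1 + u / 2) < u := by
    rcases le_or_gt u (1 / 2) with hu2 | hu2
    · have h6 : b ^ 2 < u ^ 2 := by
        have h7 : (Real.exp (2 * u))⁻¹ ≤ 1 - 2 * u + 2 * u ^ 2 := by
          rw [inv_le_comm₀ (Real.exp_pos _) (by nlinarith)]
          refine le_trans ?_ hq
          rw [inv_le_iff_one_le_mul₀ (by nlinarith)]
          nlinarith [sq_nonneg (u ^ 2)]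
        nlinarith
      nlinarith
    · have h7 : (Real.exp (2 * u))⁻¹ ≤ (1 + 2 * u + (2 * u) ^ 2 / 2)⁻¹ := by
        gcongr
      have h8 : b ^ 2 < (1 + 2 * u + (2 * u) ^ 2 / 2)⁻¹ := by nlinarith [sq_nonneg (1 - u)]
      have h9 : (0 : ℝ) < 1 + 2 * u + (2 * u) ^ 2 / 2 := by positivity
      calc b ^ 2 * (1 + u / 2) < (1 + 2 * u + (2 * u) ^ 2 / 2)⁻¹ * (1 + u / 2) := by gcongr
        _ ≤ u := by
          rw [inv_mul_le_iff₀ h9]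
          nlinarith [mul_pos hu0 hu0]
  nlinarith

lemma slope_re_pos {x y : ℂ} (hx : ‖x‖ < (Real.exp 1)⁻¹) (hy : ‖y‖ < (Real.exp 1)⁻¹)
    (hxy : x ≠ y) : 0 < ((T x - T y) / (x - y)).re := by
  have hd : x - y ≠ 0 := sub_ne_zero.2 hxy
  have hmem : ∀ s ∈ Set.Icc (0 : ℝ) 1, ‖y + s * (x - y)‖ < (Real.exp 1)⁻¹ := by
    intro s hs
    have := (convex_ball (0 : ℂ) (Real.exp 1)⁻¹).add_smul_sub_mem (x := y) (y := x)
      (by simpa using hy) (by simpa using hx) hs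
    simpa using this
  have hder : ∀ s ∈ Set.Icc (0 : ℝ) 1, HasDerivAt (fun s : ℝ => (T (y + s * (x - y)) / (x - y)).re)
      ((D (y + s * (x - y))).re) s := by
    intro s hs
    have h1 : HasDerivAt (fun z : ℂ => y + z * (x - y)) (x - y) (s : ℂ) := by
      simpa using ((hasDerivAt_id (s : ℂ)).mul_const (x - y)).const_add y
    have h2 : HasDerivAt (fun z : ℂ => T (y + z * (x - y)) / (x - y))
        (D (y + s * (x - y))) (s : ℂ) := by
      have := ((hasDerivAt_T (hmem s hs)).comp (s : ℂ) h1).div_const (x - y)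
      rw [mul_div_cancel_right₀ _ hd] at this
      exact this
    exact h2.real_of_complex
  obtain ⟨c, hc, h⟩ := exists_hasDerivAt_eq_slope (fun s : ℝ => (T (y + s * (x - y)) / (x - y)).re)
    (fun s => (D (y + s * (x - y))).re) (zero_lt_one)
    (fun s hs => (hder s hs).continuousAt.continuousWithinAt)
    (fun s hs => hder s (Set.Ioo_subset_Icc_self hs))
  have := re_D_pos (hmem c (Set.Ioo_subset_Icc_self hc))
  rw [h] at this
  simp only [Complex.ofReal_one, Complex.ofReal_zero, zero_mul, one_mul, add_zero, sub_zero, div_one,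
    add_sub_cancel] at this
  rwa [sub_div, Complex.sub_re]

noncomputable def c (x1 x2 : ℂ) (p : ℕ × ℕ) : ℂ :=
  ((p.1 + 1 : ℂ) * a p.1 * x1 ^ (p.1 + 1)) * ((p.2 + 1 : ℂ) * a p.2 * x2 ^ (p.2 + 1))

noncomputable def F (x1 x2 : ℂ) (t : ℝ) : ℂ :=
  ∑' p : ℕ × ℕ, ((p.1 + 1 : ℂ) + (p.2 + 1 : ℂ))⁻¹ * c x1 x2 p * (t : ℂ) ^ (p.1 + p.2 + 2)

lemma summable_bx {x : ℂ} (h : ‖x‖ < (Real.exp 1)⁻¹) :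
    Summable fun k : ℕ => ‖(k + 1 : ℂ) * a k * x ^ (k + 1)‖ := by
  refine ((summable_b (norm_nonneg x) h).mul_left ‖x‖).congr fun k => ?_
  rw [norm_mul _ (x ^ (k + 1)), norm_pow]; ring

lemma tsum_bx (x : ℂ) :
    ∑' k : ℕ, (k + 1 : ℂ) * a k * x ^ (k + 1) = x * D x := by
  rw [D, ← tsum_mul_left]
  exact tsum_congr fun k => by ring

lemma summable_c {x1 x2 : ℂ} (h1 : ‖x1‖ < (Real.exp 1)⁻¹) (h2 : ‖x2‖ < (Real.exp 1)⁻¹) :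
    Summable fun p : ℕ × ℕ => ‖c x1 x2 p‖ := by
  unfold c
  exact Summable.mul_norm (f := fun k : ℕ => (k + 1 : ℂ) * a k * x1 ^ (k + 1))
    (g := fun k : ℕ => (k + 1 : ℂ) * a k * x2 ^ (k + 1)) (summable_bx h1) (summable_bx h2)

lemma norm_inv_le (p : ℕ × ℕ) : ‖((p.1 + 1 : ℂ) + (p.2 + 1 : ℂ))⁻¹‖ ≤ 1 := by
  have : ((p.1 + 1 : ℂ) + (p.2 + 1 : ℂ)) = (((p.1 : ℝ) + p.2 + 2 : ℝ) : ℂ) := by push_cast; ring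
  rw [this, norm_inv, Complex.norm_real, Real.norm_of_nonneg (by positivity)]
  apply inv_le_one_of_one_le₀
  have : (0 : ℝ) ≤ (p.1 : ℝ) + p.2 := by positivity
  linarith

lemma continuousOn_F {x1 x2 : ℂ} (h1 : ‖x1‖ < (Real.exp 1)⁻¹) (h2 : ‖x2‖ < (Real.exp 1)⁻¹) :
    ContinuousOn (F x1 x2) (Set.Icc 0 1) := by
  refine continuousOn_tsum (fun p => by fun_prop) (summable_c h1 h2) ?_
  intro p t ht
  rw [norm_mul, norm_mul, norm_pow, Complex.norm_real, Real.norm_of_nonneg ht.1]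
  calc _ ≤ 1 * ‖c x1 x2 p‖ * 1 := by
        have := pow_nonneg ht.1 (p.1 + p.2 + 2)
        gcongr
        · exact norm_inv_le p
        · exact pow_le_one₀ ht.1 ht.2
    _ = _ := by ring

lemma hasDerivAt_F {x1 x2 : ℂ} (h1 : ‖x1‖ < (Real.exp 1)⁻¹) (h2 : ‖x2‖ < (Real.exp 1)⁻¹)
    {t : ℝ} (ht : t ∈ Set.Ioo (0 : ℝ) 1) :
    HasDerivAt (F x1 x2) (∑' p : ℕ × ℕ, c x1 x2 p * (t : ℂ) ^ (p.1 + p.2 + 1)) t := by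
  refine hasDerivAt_tsum_of_isPreconnected (t := Set.Ioo (-1 : ℝ) 1) (y₀ := (0 : ℝ))
    (g := fun (p : ℕ × ℕ) (t : ℝ) => ((p.1 + 1 : ℂ) + (p.2 + 1 : ℂ))⁻¹ * c x1 x2 p * (t : ℂ) ^ (p.1 + p.2 + 2))
    (g' := fun (p : ℕ × ℕ) (t : ℝ) => c x1 x2 p * (t : ℂ) ^ (p.1 + p.2 + 1))
    (summable_c h1 h2) isOpen_Ioo isPreconnected_Ioo ?_ ?_ (by simp) (by simp)
    ⟨by linarith [ht.1], ht.2⟩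
  · intro p y _
    have := ((hasDerivAt_pow (p.1 + p.2 + 2) (y : ℂ)).const_mul
      (((p.1 + 1 : ℂ) + (p.2 + 1 : ℂ))⁻¹ * c x1 x2 p)).comp_ofReal
    convert! this using 1
    have hne : ((p.1 + 1 : ℂ) + (p.2 + 1 : ℂ)) ≠ 0 := by
      have : ((p.1 + 1 : ℂ) + (p.2 + 1 : ℂ)) = ((p.1 + p.2 + 2 : ℕ) : ℂ) := by push_cast; ring
      rw [this]
      exact Nat.cast_ne_zero.2 (by omega)
    have e : p.1 + p.2 + 2 - 1 = p.1 + p.2 + 1 := by omega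
    rw [e]
    push_cast
    field_simp
    ring
  · intro p y hy
    rw [norm_mul, norm_pow, Complex.norm_real, Real.norm_eq_abs]
    have hy' : |y| ≤ 1 := abs_le.2 ⟨hy.1.le, hy.2.le⟩
    exact mul_le_of_le_one_right (norm_nonneg _) (pow_le_one₀ (abs_nonneg y) hy')

lemma norm_real_mul_lt {x : ℂ} (h : ‖x‖ < (Real.exp 1)⁻¹) {t : ℝ} (ht : t ∈ Set.Icc (0 : ℝ) 1) :
    ‖(t : ℂ) * x‖ < (Real.exp 1)⁻¹ := by
  rw [norm_mul, Complex.norm_real, Real.norm_of_nonneg ht.1]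
  exact (mul_le_of_le_one_left (norm_nonneg x) ht.2).trans_lt h

lemma deriv_F_eq {x1 x2 : ℂ} (h1 : ‖x1‖ < (Real.exp 1)⁻¹) (h2 : ‖x2‖ < (Real.exp 1)⁻¹)
    {t : ℝ} (ht : t ∈ Set.Icc (0 : ℝ) 1) :
    (t : ℂ) * (∑' p : ℕ × ℕ, c x1 x2 p * (t : ℂ) ^ (p.1 + p.2 + 1)) =
      (t * x1 * D (t * x1)) * (t * x2 * D (t * x2)) := by
  rw [← tsum_bx, ← tsum_bx, tsum_mul_tsum_of_summable_norm (summable_bx (norm_real_mul_lt h1 ht))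
    (summable_bx (norm_real_mul_lt h2 ht)), ← tsum_mul_left]
  refine tsum_congr fun p => ?_
  rw [c, mul_pow, mul_pow]
  ring

lemma hasDerivAt_Tt {x : ℂ} (h : ‖x‖ < (Real.exp 1)⁻¹) {t : ℝ} (ht : t ∈ Set.Icc (0 : ℝ) 1) :
    HasDerivAt (fun s : ℝ => T (s * x)) (D (t * x) * x) t := by
  have h1 : HasDerivAt (fun z : ℂ => z * x) x (t : ℂ) := by
    simpa using (hasDerivAt_id (t : ℂ)).mul_const x
  exact ((hasDerivAt_T (norm_real_mul_lt h ht)).comp (t : ℂ) h1).comp_ofReal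

lemma main_aux {x1 x2 : ℂ} (h1 : ‖x1‖ < (Real.exp 1)⁻¹) (h2 : ‖x2‖ < (Real.exp 1)⁻¹)
    (g g' : ℝ → ℂ) (hg : ∀ t ∈ Set.Ioc (0 : ℝ) 1, HasDerivAt g (g' t) t)
    (hre : ∀ t ∈ Set.Ioc (0 : ℝ) 1, 0 < (g t).re)
    (hg' : ∀ t ∈ Set.Ioc (0 : ℝ) 1, t * g' t =
      g t * (1 / ((1 - T (t * x1)) * (1 - T (t * x2))) - 1))
    (hlim : Filter.Tendsto g (nhdsWithin 0 (Set.Ioi 0)) (nhds 1)) :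
    F x1 x2 1 = Complex.log (g 1) - T x1 - T x2 := by
  set H : ℝ → ℂ := fun t => Complex.log (g t) - T (t * x1) - T (t * x2) - F x1 x2 t with hH
  have hsub : ∀ t ∈ Set.Ioc (0 : ℝ) 1, t ∈ Set.Icc (0 : ℝ) 1 := fun t ht => ⟨ht.1.le, ht.2⟩
  have hmain : ∀ t ∈ Set.Ioc (0 : ℝ) 1, HasDerivAt
      (fun t : ℝ => Complex.log (g t) - T (t * x1) - T (t * x2))
      (g' t / g t - D (t * x1) * x1 - D (t * x2) * x2) t := by
    intro t ht
    exact (((hg t ht).clog_real (Or.inl (hre t ht))).sub (hasDerivAt_Tt h1 (hsub t ht))).sub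
      (hasDerivAt_Tt h2 (hsub t ht))
  have hconst : ∀ ε ∈ Set.Ioo (0 : ℝ) 1, H ε = H 1 := by
    intro ε hε
    refine (constant_of_has_deriv_right_zero (f := H) (a := ε) (b := 1) ?_ ?_ 1
      ⟨hε.2.le, le_rfl⟩).symm
    · refine ContinuousOn.sub (fun t ht => (hmain t ⟨hε.1.trans_le ht.1, ht.2⟩).continuousAt.continuousWithinAt)
        ((continuousOn_F h1 h2).mono (Set.Icc_subset_Icc_left hε.1.le))
    · intro t ht
      have ht0 : 0 < t := hε.1.trans_le ht.1
      have htm : t ∈ Set.Ioc (0 : ℝ) 1 := ⟨ht0, ht.2.le⟩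
      have hd := (hmain t htm).sub (hasDerivAt_F h1 h2 ⟨ht0, ht.2⟩)
      have hz : g' t / g t - D (t * x1) * x1 - D (t * x2) * x2 -
          (∑' p : ℕ × ℕ, c x1 x2 p * (t : ℂ) ^ (p.1 + p.2 + 1)) = 0 := by
        have htc : (t : ℂ) ≠ 0 := by exact_mod_cast ht0.ne'
        have hg0 : g t ≠ 0 := by
          intro h0
          have := hre t htm
          rw [h0] at this
          simp at this
        have n1 := norm_real_mul_lt h1 (hsub t htm)
        have n2 := norm_real_mul_lt h2 (hsub t htm)
        have e1 := x_mul_D n1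
        have e2 := x_mul_D n2
        have e3 := deriv_F_eq h1 h2 (hsub t htm)
        have e4 : t * (g' t / g t) = 1 / ((1 - T (t * x1)) * (1 - T (t * x2))) - 1 := by
          rw [← mul_div_assoc, hg' t htm, mul_div_cancel_left₀ _ hg0]
        rw [e1, e2] at e3
        have o1 := one_sub_T_ne n1
        have o2 := one_sub_T_ne n2
        apply mul_left_cancel₀ htc
        have : (1 / ((1 - T (t * x1)) * (1 - T (t * x2))) - 1) - T (t * x1) / (1 - T (t * x1))
          - T (t * x2) / (1 - T (t * x2)) - (T (t * x1) / (1 - T (t * x1))) *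
            (T (t * x2) / (1 - T (t * x2))) = 0 := by
          field_simp
          ring
        linear_combination this + e4 - e1 - e2 - e3
      rw [hz] at hd
      exact hd.hasDerivWithinAt
  have hlimH : Filter.Tendsto H (nhdsWithin 0 (Set.Ioi 0)) (nhds 0) := by
    have l1 : Filter.Tendsto (fun t => Complex.log (g t)) (nhdsWithin 0 (Set.Ioi 0)) (nhds 0) := by
      have := hlim.clog (by simp)
      simpa using this
    have z0 : (0 : ℝ) ∈ Set.Icc (0 : ℝ) 1 := ⟨le_rfl, zero_le_one⟩
    have l2 : ∀ x : ℂ, ‖x‖ < (Real.exp 1)⁻¹ →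
        Filter.Tendsto (fun t : ℝ => T (t * x)) (nhdsWithin 0 (Set.Ioi 0)) (nhds 0) := by
      intro x hx
      have := (hasDerivAt_Tt hx z0).continuousAt.tendsto
      simp only [Complex.ofReal_zero, zero_mul, T_zero] at this
      exact this.mono_left nhdsWithin_le_nhds
    have l3 : Filter.Tendsto (F x1 x2) (nhdsWithin 0 (Set.Ioi 0)) (nhds 0) := by
      have := (continuousOn_F h1 h2) 0 z0
      have hF0 : F x1 x2 0 = 0 := by simp [F]
      rw [ContinuousWithinAt, hF0] at this
      have h4 := this.mono_left (nhdsWithin_mono 0 (Set.Ioo_subset_Icc_self))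
      rwa [nhdsWithin_Ioo_eq_nhdsGT zero_lt_one] at h4
    have := ((l1.sub (l2 x1 h1)).sub (l2 x2 h2)).sub l3
    simpa using this
  have hlimH1 : Filter.Tendsto H (nhdsWithin 0 (Set.Ioi 0)) (nhds (H 1)) := by
    refine tendsto_const_nhds.congr' ?_
    filter_upwards [Ioo_mem_nhdsGT (zero_lt_one (α := ℝ))] with ε hε using (hconst ε hε).symm
  have := tendsto_nhds_unique hlimH1 hlimH
  simp only [hH, Complex.ofReal_one, one_mul] at this
  linear_combination -this

lemma main_ne {x1 x2 : ℂ} (h1 : ‖x1‖ < (Real.exp 1)⁻¹) (h2 : ‖x2‖ < (Real.exp 1)⁻¹)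
    (hne : x1 ≠ x2) :
    F x1 x2 1 = Complex.log ((T x1 - T x2) / (x1 - x2)) - T x1 - T x2 := by
  have hd : x1 - x2 ≠ 0 := sub_ne_zero.2 hne
  have hz : ∀ t : ℝ, t ∈ Set.Ioc (0 : ℝ) 1 → (t : ℂ) ≠ 0 := fun t ht => by
    exact_mod_cast ht.1.ne'
  have hsub : ∀ t ∈ Set.Ioc (0 : ℝ) 1, t ∈ Set.Icc (0 : ℝ) 1 := fun t ht => ⟨ht.1.le, ht.2⟩
  have hder : ∀ t ∈ Set.Icc (0 : ℝ) 1, HasDerivAt (fun t : ℝ => T (t * x1) - T (t * x2))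
    (D (t * x1) * x1 - D (t * x2) * x2) t := fun t ht =>
      (hasDerivAt_Tt h1 ht).sub (hasDerivAt_Tt h2 ht)
  have := main_aux h1 h2 (fun t => (T (t * x1) - T (t * x2)) / (t * (x1 - x2)))
    (fun t => ((D (t * x1) * x1 - D (t * x2) * x2) * (t * (x1 - x2)) -
      (T (t * x1) - T (t * x2)) * (x1 - x2)) / (t * (x1 - x2)) ^ 2) ?_ ?_ ?_ ?_
  · simpa using this
  · intro t ht
    have h3 : HasDerivAt (fun t : ℝ => (t : ℂ) * (x1 - x2)) (x1 - x2) t := by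
      simpa using ((hasDerivAt_id (t : ℂ)).mul_const (x1 - x2)).comp_ofReal
    exact (hder t (hsub t ht)).div h3 (mul_ne_zero (hz t ht) hd)
  · intro t ht
    have := slope_re_pos (norm_real_mul_lt h1 (hsub t ht)) (norm_real_mul_lt h2 (hsub t ht))
      (fun h => hne (mul_left_cancel₀ (hz t ht) h))
    rwa [← mul_sub] at this
  · intro t ht
    have ht0 := hz t ht
    have n1 := norm_real_mul_lt h1 (hsub t ht)
    have n2 := norm_real_mul_lt h2 (hsub t ht)
    have e1 := x_mul_D n1
    have e2 := x_mul_D n2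
    have o1 := one_sub_T_ne n1
    have o2 := one_sub_T_ne n2
    have e : (t : ℂ) * (D (t * x1) * x1 - D (t * x2) * x2) =
        (T (t * x1) - T (t * x2)) * (1 / ((1 - T (t * x1)) * (1 - T (t * x2)))) := by
      have : (t : ℂ) * (D (t * x1) * x1 - D (t * x2) * x2) =
        T (t * x1) / (1 - T (t * x1)) - T (t * x2) / (1 - T (t * x2)) := by
        rw [← e1, ← e2]; ring
      rw [this]
      field_simp
      ring
    generalize 1 / ((1 - T (t * x1)) * (1 - T (t * x2))) = q at *
    field_simp
    linear_combination e
  · have z0 : (0 : ℝ) ∈ Set.Icc (0 : ℝ) 1 := ⟨le_rfl, zero_le_one⟩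
    have h4 := (hder 0 z0).tendsto_slope_zero
    have hD0 : D 0 = 1 := by
      rw [D_eq (by simpa using Real.exp_pos 1), T_zero]; simp
    simp only [Complex.ofReal_zero, zero_mul, T_zero, hD0, one_mul, zero_add, sub_zero] at h4
    have h5 := (h4.mono_left (nhdsWithin_mono 0 (show Set.Ioi (0 : ℝ) ⊆ {0}ᶜ from
      fun t ht => ne_of_gt ht))).div_const (x1 - x2)
    rw [div_self hd] at h5
    refine h5.congr fun t => ?_
    rw [Complex.real_smul, Complex.ofReal_inv, ← div_eq_inv_mul, div_div]

lemma main_eq {x : ℂ} (h : ‖x‖ < (Real.exp 1)⁻¹) :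
    F x x 1 = Complex.log (D x) - T x - T x := by
  have hsub : ∀ t ∈ Set.Ioc (0 : ℝ) 1, t ∈ Set.Icc (0 : ℝ) 1 := fun t ht => ⟨ht.1.le, ht.2⟩
  have hder : ∀ t ∈ Set.Icc (0 : ℝ) 1,
      HasDerivAt (fun t : ℝ => Complex.exp (T (t * x)) / (1 - T (t * x)))
      ((Complex.exp (T (t * x)) * (D (t * x) * x) * (1 - T (t * x)) -
        Complex.exp (T (t * x)) * (-(D (t * x) * x))) / (1 - T (t * x)) ^ 2) t := by
    intro t ht
    have h3 := hasDerivAt_Tt h ht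
    exact h3.cexp.div (h3.const_sub 1) (one_sub_T_ne (norm_real_mul_lt h ht))
  have := main_aux h h (fun t => Complex.exp (T (t * x)) / (1 - T (t * x))) _
    (fun t ht => hder t (hsub t ht)) ?_ ?_ ?_
  · rw [D_eq h]
    simpa using this
  · intro t ht
    have n := norm_real_mul_lt h (hsub t ht)
    rw [← D_eq n]
    exact re_D_pos n
  · intro t ht
    have n := norm_real_mul_lt h (hsub t ht)
    have e := x_mul_D n
    have o := one_sub_T_ne n
    have e' : (t : ℂ) * (D (t * x) * x) * (1 - T (t * x)) = T (t * x) := by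
      rw [eq_div_iff o] at e
      linear_combination e
    field_simp
    linear_combination (2 - T (t * x)) * e'
  · have z0 : (0 : ℝ) ∈ Set.Icc (0 : ℝ) 1 := ⟨le_rfl, zero_le_one⟩
    have := (hder 0 z0).continuousAt.tendsto
    simp only [Complex.ofReal_zero, zero_mul, T_zero, Complex.exp_zero, sub_zero, div_one] at this
    exact this.mono_left nhdsWithin_le_nhds

end H02

theorem laplace_transform_H02 (x1 x2 : ℂ)
    (h1 : ‖x1‖ < (Real.exp 1)⁻¹) (h2 : ‖x2‖ < (Real.exp 1)⁻¹) :
    (∑' p : ℕ × ℕ,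
        (((p.1 + 1 : ℂ)) + (p.2 + 1 : ℂ))⁻¹ *
          ((p.1 + 1 : ℂ) ^ (p.1 + 1) / ((p.1 + 1)! : ℂ)) *
          ((p.2 + 1 : ℂ) ^ (p.2 + 1) / ((p.2 + 1)! : ℂ)) *
          x1 ^ (p.1 + 1) * x2 ^ (p.2 + 1)) =
      Complex.log (∑' k : ℕ, ((k + 1 : ℂ)) ^ k / ((k + 1)! : ℂ) *
          ∑ i ∈ Finset.range (k + 1), x1 ^ i * x2 ^ (k - i))
        - (∑' k : ℕ, ((k + 1 : ℂ)) ^ k / ((k + 1)! : ℂ) * x1 ^ (k + 1))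
        - (∑' k : ℕ, ((k + 1 : ℂ)) ^ k / ((k + 1)! : ℂ) * x2 ^ (k + 1)) := by
  have hF : (∑' p : ℕ × ℕ,
        (((p.1 + 1 : ℂ)) + (p.2 + 1 : ℂ))⁻¹ *
          ((p.1 + 1 : ℂ) ^ (p.1 + 1) / ((p.1 + 1)! : ℂ)) *
          ((p.2 + 1 : ℂ) ^ (p.2 + 1) / ((p.2 + 1)! : ℂ)) *
          x1 ^ (p.1 + 1) * x2 ^ (p.2 + 1)) = H02.F x1 x2 1 := by
    unfold H02.F H02.c H02.a
    refine tsum_congr fun p => ?_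
    rw [Complex.ofReal_one, one_pow]
    ring
  rw [hF]
  change _ = Complex.log (∑' k : ℕ, H02.a k *
          ∑ i ∈ Finset.range (k + 1), x1 ^ i * x2 ^ (k - i)) - H02.T x1 - H02.T x2
  by_cases hne : x1 = x2
  · subst hne
    rw [H02.main_eq h1, H02.D]
    congr 4
    ext k
    have : ∀ i ∈ Finset.range (k + 1), x1 ^ i * x1 ^ (k - i) = x1 ^ k := by
      intro i hi
      rw [← pow_add]
      congr 1
      have := Finset.mem_range.1 hi
      omega
    rw [Finset.sum_congr rfl this]
    simp
    ring
  · rw [H02.main_ne h1 h2 hne]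
    congr 4
    rw [div_eq_iff (sub_ne_zero.2 hne), H02.T, H02.T,
      ← (H02.summable_T h1).tsum_sub (H02.summable_T h2), ← tsum_mul_right]
    refine tsum_congr fun k => ?_
    have := geom_sum₂_mul x1 x2 (k + 1)
    simp only [Nat.add_sub_cancel_right, Nat.add_sub_cancel] at this
    rw [mul_assoc, this]
    ring
end

section
/- Let ξ̂_n(t) be defined by ξ̂_0(t) = t-1 and ξ̂_{n+1} = t²(t-1) d/dt ξ̂_n. Then for each n ≥ 0 and |x| < 1/e, Σ_{k=1}^∞ (k^{k+n}/k!) x^k = ξ̂_n(t(x)), where t(x) = 1 + Σ_{k≥1}(k^k/k!)x^k. -/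
open Polynomial
open scoped Nat

/-- The polynomials `ξ̂_n(t)` defined by `ξ̂_0(t) = t - 1` and
`ξ̂_{n+1}(t) = t²(t-1) · d/dt ξ̂_n(t)`. -/
noncomputable def xihat : ℕ → Polynomial ℚ
  | 0 => X - 1
  | n + 1 => X ^ 2 * (X - 1) * derivative (xihat n)

namespace XihatAux

/-- `G n = Σ k^(k+n)/k! X^k`. -/
noncomputable def G (n : ℕ) : PowerSeries ℚ :=
  PowerSeries.mk fun k => (k : ℚ) ^ (k + n) / (k ! : ℚ)

/-- coefficients of `1 - T` up to factorials. -/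
def c (j : ℕ) : ℚ := if j = 0 then 1 else -(j : ℚ) ^ (j - 1)

/-- `U = 1 - T`. -/
noncomputable def U : PowerSeries ℚ :=
  PowerSeries.mk fun k => c k / (k ! : ℚ)

lemma diff_zero (m : ℕ) (hm : 2 ≤ m) :
    ∑ p ∈ Finset.HasAntidiagonal.antidiagonal m, (-1 : ℚ) ^ p.2 * (p.1 : ℚ) ^ (m - 1) / (p.1 ! * p.2 !) = 0 := by
  have h := congrFun (fwdDiff_iter_pow_eq_zero_of_lt (R := ℚ) (show m - 1 < m by omega)) 0
  rw [fwdDiff_iter_eq_sum_shift] at h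
  rw [Finset.Nat.sum_antidiagonal_eq_sum_range_succ_mk]
  have h2 : (m ! : ℚ) ≠ 0 := by positivity
  apply mul_left_cancel₀ h2
  rw [mul_zero, Finset.mul_sum]
  simp only [Pi.zero_apply] at h
  rw [← h]
  refine Finset.sum_congr rfl fun k hk => ?_
  have hk' : k ≤ m := by simp at hk; omega
  simp only [zsmul_eq_mul]
  push_cast
  rw [Nat.cast_choose ℚ hk']
  simp
  ring

lemma inner_sum (m : ℕ) :
    ∑ p ∈ Finset.HasAntidiagonal.antidiagonal m, c p.1 / p.1 ! * ((-(p.1 : ℚ)) ^ p.2 / p.2 !) =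
      if m = 0 then 1 else if m = 1 then -1 else 0 := by
  rcases m with _ | _ | m
  · simp [c]
  · simp [c, Finset.Nat.antidiagonal_succ]
  · simp only [Nat.add_eq_zero_iff, one_ne_zero, and_false, if_false]
    rw [if_neg (by omega), ← neg_eq_zero, ← Finset.sum_neg_distrib,
      ← diff_zero (m + 1 + 1) (by omega)]
    refine Finset.sum_congr rfl fun p hp => ?_
    rw [Finset.HasAntidiagonal.mem_antidiagonal] at hp
    rcases p with ⟨j, l⟩
    simp only at hp ⊢
    rcases j with _ | j
    · have : l ≠ 0 := by omega
      simp [this]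
    · have : m + 1 + 1 - 1 = j + l := by omega
      rw [this, neg_pow, pow_add]
      simp only [c, Nat.add_eq_zero_iff, one_ne_zero, and_false, if_false, Nat.add_sub_cancel]
      field_simp

lemma expand (n j k : ℕ) (h : j + k = n) :
    (k : ℚ) ^ k / k ! = ∑ q ∈ Finset.HasAntidiagonal.antidiagonal k,
      (-(j : ℚ)) ^ q.1 / q.1 ! * ((n : ℚ) ^ q.2 / q.2 !) := by
  have : (k : ℚ) = -(j : ℚ) + n := by rw [← h]; push_cast; ring
  conv_lhs => rw [this]
  rw [(Commute.all _ _).add_pow', Finset.sum_div]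
  refine Finset.sum_congr rfl fun q hq => ?_
  rw [Finset.HasAntidiagonal.mem_antidiagonal] at hq
  have hq' : q.1 ≤ k := by omega
  have : k - q.1 = q.2 := by omega
  rw [nsmul_eq_mul, Nat.cast_choose ℚ hq', this]
  field_simp

lemma sum_assoc (n : ℕ) (f : ℕ → ℕ → ℕ → ℚ) :
    ∑ p ∈ Finset.HasAntidiagonal.antidiagonal n,
        ∑ q ∈ Finset.HasAntidiagonal.antidiagonal p.1, f q.1 q.2 p.2 =
      ∑ p ∈ Finset.HasAntidiagonal.antidiagonal n,
        ∑ q ∈ Finset.HasAntidiagonal.antidiagonal p.2, f p.1 q.1 q.2 := by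
  rw [Finset.sum_sigma', Finset.sum_sigma']
  refine Finset.sum_bij' (fun a _ => ⟨(a.2.1, a.2.2 + a.1.2), (a.2.2, a.1.2)⟩)
    (fun a _ => ⟨(a.1.1 + a.2.1, a.2.2), (a.1.1, a.2.1)⟩) ?_ ?_ ?_ ?_ ?_
  · rintro ⟨⟨a, b⟩, ⟨d, e⟩⟩ h
    simp at h ⊢
    omega
  · rintro ⟨⟨a, b⟩, ⟨d, e⟩⟩ h
    simp at h ⊢
    omega
  · rintro ⟨⟨a, b⟩, ⟨d, e⟩⟩ h
    simp at h
    obtain ⟨h1, rfl⟩ := h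
    rfl
  · rintro ⟨⟨a, b⟩, ⟨d, e⟩⟩ h
    simp at h
    obtain ⟨h1, rfl⟩ := h
    rfl
  · rintro ⟨⟨a, b⟩, ⟨d, e⟩⟩ h
    rfl

lemma U_mul_G : U * G 0 = 1 := by
  ext n
  rw [PowerSeries.coeff_mul, PowerSeries.coeff_one]
  have : ∀ p ∈ Finset.HasAntidiagonal.antidiagonal n, PowerSeries.coeff p.1 U * PowerSeries.coeff p.2 (G 0) =
      ∑ q ∈ Finset.HasAntidiagonal.antidiagonal p.2, c p.1 / p.1 ! * ((-(p.1 : ℚ)) ^ q.1 / q.1 !) *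
        ((n : ℚ) ^ q.2 / q.2 !) := by
    intro p hp
    simp only [U, G, PowerSeries.coeff_mk, add_zero]
    rw [expand n p.1 p.2 (Finset.HasAntidiagonal.mem_antidiagonal.1 hp), Finset.mul_sum]
    exact Finset.sum_congr rfl fun q _ => by ring
  rw [Finset.sum_congr rfl this]
  rw [← sum_assoc n (fun a b d => c a / a ! * ((-(a : ℚ)) ^ b / b !) *
        ((n : ℚ) ^ d / d !))]
  simp only [← Finset.sum_mul, inner_sum]
  rcases n with _ | n
  · simp
  · rw [Finset.Nat.sum_antidiagonal_succ]
    rcases n with _ | n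
    · simp
    rw [Finset.Nat.sum_antidiagonal_succ]
    simp
    rw [Nat.factorial_succ (n+1)]
    push_cast
    field_simp
    ring

lemma theta_G (n : ℕ) : PowerSeries.X * PowerSeries.derivative ℚ (G n) = G (n + 1) := by
  ext k
  rcases k with _ | k
  · simp [G]
  · rw [PowerSeries.coeff_succ_X_mul, PowerSeries.coeff_derivative]
    simp only [G, PowerSeries.coeff_mk]
    push_cast
    ring

lemma theta_U : PowerSeries.X * PowerSeries.derivative ℚ U = 1 - G 0 := by
  ext k
  rcases k with _ | k
  · simp [G]
  · rw [PowerSeries.coeff_succ_X_mul, PowerSeries.coeff_derivative]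
    simp [G, U, c, PowerSeries.coeff_one]
    ring

lemma G_one : G 1 = G 0 ^ 2 * (G 0 - 1) := by
  have h := congrArg (fun f => PowerSeries.X * PowerSeries.derivative ℚ f) U_mul_G
  simp only [Derivation.leibniz, smul_eq_mul, PowerSeries.derivative_one, mul_zero] at h
  have hU := theta_U
  have hG := theta_G 0
  have hUG := U_mul_G
  rw [zero_add] at hG
  linear_combination (G 0) * h - (G 0)^2 * hU - G 0 * U * hG - G 1 * hUG

lemma formal (n : ℕ) : aeval (G 0) (xihat n) = G n - if n = 0 then 1 else 0 := by
  induction n with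
  | zero => simp [xihat]
  | succ n ih =>
    have h := congrArg (fun f => PowerSeries.X * PowerSeries.derivative ℚ f) ih
    simp only [Derivation.map_aeval, smul_eq_mul, map_sub] at h
    have h0 : PowerSeries.derivative ℚ (if n = 0 then 1 else 0 : PowerSeries ℚ) = 0 := by
      split_ifs <;> simp
    rw [h0, sub_zero, theta_G] at h
    have hG := theta_G 0
    have h1 := G_one
    rw [zero_add] at hG
    simp only [xihat, map_mul, map_pow, map_sub, aeval_X, map_one, Nat.add_eq_zero_iff,
      one_ne_zero, and_false, if_false, sub_zero]
    linear_combination h - aeval (G 0) (derivative (xihat n)) * (hG + h1)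

/-- absolute convergence at `x`. -/
def Conv (x : ℂ) (f : PowerSeries ℚ) : Prop :=
  Summable fun k => ‖((PowerSeries.coeff k f : ℚ) : ℂ) * x ^ k‖

/-- evaluation at `x`. -/
noncomputable def ev (x : ℂ) (f : PowerSeries ℚ) : ℂ :=
  ∑' k, ((PowerSeries.coeff k f : ℚ) : ℂ) * x ^ k

lemma coeff_mul_eq (x : ℂ) (f g : PowerSeries ℚ) (k : ℕ) :
    ((PowerSeries.coeff k (f * g) : ℚ) : ℂ) * x ^ k = ∑ p ∈ Finset.HasAntidiagonal.antidiagonal k,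
      (((PowerSeries.coeff p.1 f : ℚ) : ℂ) * x ^ p.1) *
        (((PowerSeries.coeff p.2 g : ℚ) : ℂ) * x ^ p.2) := by
  rw [PowerSeries.coeff_mul]
  push_cast
  rw [Finset.sum_mul]
  refine Finset.sum_congr rfl fun p hp => ?_
  rw [← Finset.HasAntidiagonal.mem_antidiagonal.1 hp, pow_add]
  ring

lemma conv_mul {x : ℂ} {f g : PowerSeries ℚ} (hf : Conv x f) (hg : Conv x g) :
    Conv x (f * g) := by
  unfold Conv
  simp only [coeff_mul_eq]
  exact summable_norm_sum_mul_antidiagonal_of_summable_norm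
    (f := fun k => ((PowerSeries.coeff k f : ℚ) : ℂ) * x ^ k)
    (g := fun k => ((PowerSeries.coeff k g : ℚ) : ℂ) * x ^ k) hf hg

lemma ev_mul {x : ℂ} {f g : PowerSeries ℚ} (hf : Conv x f) (hg : Conv x g) :
    ev x (f * g) = ev x f * ev x g := by
  unfold ev
  simp only [coeff_mul_eq]
  exact (tsum_mul_tsum_eq_tsum_sum_antidiagonal_of_summable_norm hf hg).symm

lemma conv_add {x : ℂ} {f g : PowerSeries ℚ} (hf : Conv x f) (hg : Conv x g) :
    Conv x (f + g) := by
  refine Summable.of_nonneg_of_le (fun _ => norm_nonneg _) (fun k => ?_) (Summable.add hf hg)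
  rw [map_add, Rat.cast_add, add_mul]
  exact norm_add_le _ _

lemma ev_add {x : ℂ} {f g : PowerSeries ℚ} (hf : Conv x f) (hg : Conv x g) :
    ev x (f + g) = ev x f + ev x g := by
  unfold ev
  rw [← Summable.tsum_add hf.of_norm hg.of_norm]
  simp [add_mul]

lemma conv_C (x : ℂ) (a : ℚ) : Conv x (PowerSeries.C a) := by
  apply summable_of_ne_finset_zero (s := {0})
  intro k hk
  simp at hk
  simp [PowerSeries.coeff_C, hk]

lemma ev_C (x : ℂ) (a : ℚ) : ev x (PowerSeries.C a) = a := by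
  unfold ev
  rw [tsum_eq_single 0]
  · simp
  · intro k hk
    simp [PowerSeries.coeff_C, hk]

lemma ev_aeval {x : ℂ} {f : PowerSeries ℚ} (hf : Conv x f) (p : ℚ[X]) :
    Conv x (aeval f p) ∧ ev x (aeval f p) = aeval (ev x f) p := by
  induction p using Polynomial.induction_on with
  | C a =>
    rw [aeval_C, aeval_C]
    exact ⟨conv_C x a, ev_C x a⟩
  | add p q hp hq =>
    rw [map_add, map_add, ev_add hp.1 hq.1, hp.2, hq.2]
    exact ⟨conv_add hp.1 hq.1, rfl⟩
  | monomial n a h =>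
    rw [pow_succ, ← mul_assoc, map_mul _ (C a * X ^ n) X, map_mul _ (C a * X ^ n) X, aeval_X, aeval_X, ev_mul h.1 hf, h.2]
    exact ⟨conv_mul h.1 hf, rfl⟩

lemma conv_G (n : ℕ) (x : ℂ) (hx : ‖x‖ < (Real.exp 1)⁻¹) : Conv x (G n) := by
  have hr : ‖Real.exp 1 * ‖x‖‖ < 1 := by
    rw [Real.norm_of_nonneg (by positivity)]
    calc Real.exp 1 * ‖x‖ < Real.exp 1 * (Real.exp 1)⁻¹ := by gcongr
      _ = 1 := mul_inv_cancel₀ (by positivity)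
  refine Summable.of_nonneg_of_le (fun _ => norm_nonneg _) (fun k => ?_)
    (summable_pow_mul_geometric_of_norm_lt_one n hr)
  have h := Real.pow_div_factorial_le_exp (x := (k : ℝ)) (by positivity) k
  simp only [G, PowerSeries.coeff_mk]
  push_cast
  rw [norm_mul, norm_div, norm_pow, norm_pow, Complex.norm_natCast, Complex.norm_natCast, mul_pow,
    ← Real.exp_nat_mul, mul_one, pow_add]
  calc (k : ℝ) ^ k * k ^ n / k ! * ‖x‖ ^ k = k ^ n * ((k ^ k / k !) * ‖x‖ ^ k) := by ring
    _ ≤ _ := by gcongr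

lemma ev_G (n : ℕ) (x : ℂ) (hx : ‖x‖ < (Real.exp 1)⁻¹) :
    ev x (G n) = (if n = 0 then 1 else 0) +
      ∑' k : ℕ, ((k + 1 : ℂ)) ^ (k + 1 + n) / ((k + 1)! : ℂ) * x ^ (k + 1) := by
  unfold ev
  rw [(conv_G n x hx).of_norm.tsum_eq_zero_add]
  congr 1
  · rcases n with _ | n <;> simp [G]
  · refine tsum_congr fun k => ?_
    simp [G]

end XihatAux

/-- For each `n ≥ 0` and `|x| < 1/e`,
`Σ_{k≥1} (k^{k+n}/k!) x^k = ξ̂_n(t(x))` where `t(x) = 1 + Σ_{k≥1} (k^k/k!) x^k`. -/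
theorem laplace_transform_is_xihat (n : ℕ) (x : ℂ) (hx : ‖x‖ < (Real.exp 1)⁻¹) :
    (∑' k : ℕ, ((k + 1 : ℂ)) ^ (k + 1 + n) / ((k + 1)! : ℂ) * x ^ (k + 1)) =
      Polynomial.aeval
        (1 + ∑' k : ℕ, ((k + 1 : ℂ)) ^ (k + 1) / ((k + 1)! : ℂ) * x ^ (k + 1))
        (xihat n) := by
  have h0 := XihatAux.ev_G 0 x hx
  simp only [if_true, add_zero] at h0
  rw [← h0, ← (XihatAux.ev_aeval (XihatAux.conv_G 0 x hx) (xihat n)).2]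
  have hn := XihatAux.ev_G n x hx
  have hf : XihatAux.G n = aeval (XihatAux.G 0) (xihat n) +
      PowerSeries.C (if n = 0 then 1 else 0 : ℚ) := by
    rw [XihatAux.formal]
    split_ifs <;> simp
  rw [hf, XihatAux.ev_add (XihatAux.ev_aeval (XihatAux.conv_G 0 x hx) (xihat n)).1
    (XihatAux.conv_C x _), XihatAux.ev_C] at hn
  have hc : (((if n = 0 then 1 else 0 : ℚ)) : ℂ) = if n = 0 then 1 else 0 := by
    split_ifs <;> simp
  rw [hc] at hn
  linear_combination -hn
end

section
/- For μ a partition with a single part (k), the genus-g cut-and-join equation reads (2g-1+k) H_g(k) = (1/2) Σ_{α+β=k, α,β≥1} αβ ( H_{g-1}(α,β) + Σ_{g1+g2=g} H_{g1}(α) H_{g2}(β) ), where H_g(μ) = (|Aut μ|/(2g-2+ℓ(μ)+|μ|)!) h_{g,μ}. -/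
open Equiv

/-- The normalized Hurwitz number `H_g(k) = |Aut((k))| h_{g,(k)} / r!` for the
one-part profile `(k)`, where `r = 2g - 2 + 1 + k` and `|Aut((k))| = 1`. -/
noncomputable def Hone (g k : ℕ) : ℚ :=
  hurwitzNumber g {k} / (Nat.factorial (2 * g + 1 + k - 2) : ℚ)

/-- The normalized Hurwitz number `H_g(α,β) = |Aut((α,β))| h_{g,(α,β)} / r!` for the
two-part profile `(α,β)`, where `r = 2g - 2 + 2 + α + β`. -/
noncomputable def Htwo (g α β : ℕ) : ℚ :=
  (if α = β then 2 else 1) * hurwitzNumber g {α, β} /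
    (Nat.factorial (2 * g + 2 + (α + β) - 2) : ℚ)

open Equiv
namespace CJ

section gen
variable {G H : Type*} [Group G] [Group H]

open Classical in
/-- Number of words of length `n` in `S` whose product satisfies `p`. -/
noncomputable def cnt (S : Finset G) : ℕ → (G → Prop) → ℕ
  | 0, p => if p 1 then 1 else 0
  | n + 1, p => ∑ s ∈ S, cnt S n (fun x => p (s * x))

theorem card_tuples [Finite G] (S : Finset G) (n : ℕ) (p : G → Prop) :
    Nat.card {t : Fin n → G // (∀ i, t i ∈ S) ∧ p (List.ofFn t).prod} = cnt S n p := by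
  classical
  induction n generalizing p with
  | zero =>
    by_cases h : p 1
    · simp [cnt, h]
    · simp [cnt, h]
  | succ n ih =>
    have e : {t : Fin (n + 1) → G // (∀ i, t i ∈ S) ∧ p (List.ofFn t).prod} ≃
        Σ s : S, {t : Fin n → G // (∀ i, t i ∈ S) ∧ p (s * (List.ofFn t).prod)} :=
      { toFun := fun t => ⟨⟨t.1 0, t.2.1 0⟩, ⟨fun i => t.1 i.succ, fun i => t.2.1 _, by
          have := t.2.2
          simpa [List.ofFn_succ] using this⟩⟩
        invFun := fun q => ⟨Fin.cons q.1.1 q.2.1, by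
          intro i
          refine Fin.cases ?_ (fun j => ?_) i
          · simp
          · simpa using q.2.2.1 j, by
          have := q.2.2.2
          simpa [List.ofFn_succ] using this⟩
        left_inv := by
          rintro ⟨t, ht⟩
          apply Subtype.ext
          exact Fin.cons_self_tail t
        right_inv := by
          rintro ⟨⟨s, hs⟩, ⟨t, ht⟩⟩
          rfl }
    rw [Nat.card_congr e, Nat.card_sigma]
    simp only [cnt]
    rw [← Finset.sum_coe_sort S]
    exact Finset.sum_congr rfl fun s _ => ih (fun x => p (s * x))

theorem cnt_congr (S : Finset G) (n : ℕ) {p q : G → Prop} (h : ∀ x, p x ↔ q x) :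
    cnt S n p = cnt S n q := by
  have : p = q := funext fun x => propext (h x)
  rw [this]

theorem cnt_map [DecidableEq H] (f : G →* H) (hf : Function.Injective f) (S : Finset G) (n : ℕ) (p : H → Prop) :
    cnt (S.image f) n p = cnt S n (fun x => p (f x)) := by
  induction n generalizing p with
  | zero => by_cases h : p 1 <;> simp [cnt, h]
  | succ n ih =>
    simp only [cnt]
    rw [Finset.sum_image (fun a _ b _ h => hf h)]
    simp [ih]

open Classical in
theorem cnt_eq_sum [Fintype G] (S : Finset G) (n : ℕ) (p : G → Prop) :
    cnt S n p = ∑ x : G, (if p x then 1 else 0) * cnt S n (fun y => y = x) := by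
  induction n generalizing p with
  | zero => simp [cnt]
  | succ n ih =>
    simp only [cnt]
    simp_rw [Finset.mul_sum]
    rw [Finset.sum_comm]
    refine Finset.sum_congr rfl fun s _ => ?_
    rw [ih]
    refine Fintype.sum_equiv (Equiv.mulLeft s) _ _ fun x => ?_
    by_cases h : p (s * x) <;> simp [h]

theorem cnt_prod [DecidableEq G] [DecidableEq H] (S : Finset G) (T : Finset H)
    (hS : (1 : G) ∉ S) (n : ℕ) (p : G → Prop) (q : H → Prop) :
    cnt (S.image (fun s => (s, (1 : H))) ∪ T.image (fun t => ((1 : G), t))) n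
      (fun x => p x.1 ∧ q x.2) =
    ∑ ij ∈ Finset.HasAntidiagonal.antidiagonal n, n.choose ij.1 * (cnt S ij.1 p * cnt T ij.2 q) := by
  induction n generalizing p q with
  | zero => 
    by_cases h : p 1 <;> by_cases h' : q 1 <;> simp [cnt, h, h']
  | succ n ih =>
    have key := Finset.sum_antidiagonal_choose_succ_mul (fun i j => cnt S i p * cnt T j q) n
    simp only [Nat.cast_id] at key
    rw [key]
    simp only [cnt]
    rw [Finset.sum_union]
    · rw [Finset.sum_image (by intro a _ b _ h; simpa using h),
        Finset.sum_image (by intro a _ b _ h; simpa using h)]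
      simp only [Prod.fst_mul, Prod.snd_mul, one_mul]
      rw [add_comm]
      congr 1
      · simp_rw [fun t => ih p (fun x => q (t * x)), Finset.mul_sum]
        rw [Finset.sum_comm]
      · simp_rw [fun s => ih (fun x => p (s * x)) q, Finset.sum_mul, Finset.mul_sum]
        rw [Finset.sum_comm]
        refine Finset.sum_congr rfl fun ij hij => ?_
        have h := Finset.HasAntidiagonal.mem_antidiagonal.1 hij
        have h2 : n.choose ij.2 = n.choose ij.1 :=
          Nat.choose_symm_of_eq_add (by omega)
        simp only [h2]
    · rw [Finset.disjoint_left]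
      intro x hx hy
      simp only [Finset.mem_image] at hx hy
      obtain ⟨s, hs, rfl⟩ := hx
      obtain ⟨t, ht, h⟩ := hy
      simp only [Prod.mk.injEq] at h
      exact hS (h.1 ▸ hs)

end gen
section perm
variable {X : Type*} [Fintype X] [DecidableEq X]

/-- All points in one cycle. -/
def full (σ : Perm X) : Prop := ∀ x y, σ.SameCycle x y

/-- The cycles of `σ` are `A` and its complement. -/
def spl (σ : Perm X) (A : Finset X) : Prop := ∀ x y, σ.SameCycle x y ↔ (x ∈ A ↔ y ∈ A)

variable (X) in
open Classical in
/-- The finset of transpositions. -/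
noncomputable def swaps : Finset (Perm X) := Finset.univ.filter Perm.IsSwap

theorem mem_swaps {s : Perm X} : s ∈ swaps X ↔ s.IsSwap := by
  simp [swaps]

theorem pow_agree (σ : Perm X) (a b x : X) (n : ℕ)
    (h : ∀ i, 0 < i → i ≤ n → (σ ^ i) x ≠ a ∧ (σ ^ i) x ≠ b) :
    ((swap a b * σ) ^ n) x = (σ ^ n) x := by
  induction n with
  | zero => simp
  | succ n ih =>
    rw [pow_succ', Perm.mul_apply, ih (fun i h0 h1 => h i h0 (by omega)), Perm.mul_apply,
      ← Perm.mul_apply σ, ← pow_succ']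
    have := h (n + 1) (by omega) le_rfl
    exact swap_apply_of_ne_of_ne this.1 this.2

theorem first_hit (σ : Perm X) (a b x : X) (h : σ.SameCycle x a ∨ σ.SameCycle x b) :
    ∃ n, ((σ ^ n) x = a ∨ (σ ^ n) x = b) ∧
      ((swap a b * σ) ^ n) x = swap a b ((σ ^ n) x) := by
  classical
  have hex : ∃ n, 0 < n ∧ ((σ ^ n) x = a ∨ (σ ^ n) x = b) := by
    rcases h with h | h
    · obtain ⟨i, h0, -, hi⟩ := h.exists_pow_eq
      exact ⟨i, h0, Or.inl hi⟩
    · obtain ⟨i, h0, -, hi⟩ := h.exists_pow_eq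
      exact ⟨i, h0, Or.inr hi⟩
  obtain ⟨h0, hn⟩ := Nat.find_spec hex
  have hmin := fun m => Nat.find_min (H := hex) (m := m)
  generalize Nat.find hex = n at *
  refine ⟨n, hn, ?_⟩
  obtain ⟨m, rfl⟩ : ∃ m, n = m + 1 := ⟨n - 1, by omega⟩
  rw [pow_succ', Perm.mul_apply, pow_agree, Perm.mul_apply, ← Perm.mul_apply σ, ← pow_succ']
  intro i hi him
  have := hmin i (by omega)
  push Not at this
  exact this hi

theorem swap_same (σ : Perm X) (a b x : X) (h : σ.SameCycle x a ∨ σ.SameCycle x b) :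
    (swap a b * σ).SameCycle x a ∨ (swap a b * σ).SameCycle x b := by
  obtain ⟨n, h1, h2⟩ := first_hit σ a b x h
  rcases h1 with h1 | h1
  · rw [h1, swap_apply_left] at h2
    exact Or.inr ⟨n, by simpa using h2⟩
  · rw [h1, swap_apply_right] at h2
    exact Or.inl ⟨n, by simpa using h2⟩

theorem swap_join (σ : Perm X) (a b x : X) (h : σ.SameCycle x a) (hab : ¬ σ.SameCycle a b) :
    (swap a b * σ).SameCycle x b := by
  obtain ⟨n, h1, h2⟩ := first_hit σ a b x (Or.inl h)
  rcases h1 with h1 | h1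
  · rw [h1, swap_apply_left] at h2
    exact ⟨n, by simpa using h2⟩
  · exact absurd (h.symm.trans ⟨n, by simpa using h1⟩) hab

theorem sign_full [Nonempty X] (σ : Perm X) (h : full σ) :
    Perm.sign σ = -(-1) ^ Fintype.card X := by
  by_cases h1 : ∃ x, σ x = x
  · obtain ⟨x, hx⟩ := h1
    have hall : ∀ y, y = x := by
      intro y
      obtain ⟨n, hn⟩ := h x y
      rw [← hn]
      exact Perm.zpow_apply_eq_self_of_apply_eq_self hx n
    have hs : Subsingleton X := ⟨fun a b => (hall a).trans (hall b).symm⟩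
    have h2 : σ = 1 := Subsingleton.elim _ _
    have h3 : Fintype.card X = 1 := Fintype.card_eq_one_iff.2 ⟨x, hall⟩
    simp [h2, h3]
  · push Not at h1
    obtain ⟨x⟩ := ‹Nonempty X›
    have hc : σ.IsCycle := ⟨x, h1 x, fun y _ => h x y⟩
    rw [hc.sign]
    have : σ.support = Finset.univ := by
      ext y; simp [h1 y]
    rw [this, Finset.card_univ]

theorem full_swap_iff (σ : Perm X) (a b : X) (hab : a ≠ b) :
    full (swap a b * σ) ↔ ∃ A, spl σ A ∧ a ∈ A ∧ b ∉ A := by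
  classical
  have : Nonempty X := ⟨a⟩
  constructor
  · intro h
    have hx : ∀ x, σ.SameCycle x a ∨ σ.SameCycle x b := by
      intro x
      have := swap_same (swap a b * σ) a b x (Or.inl (h x a))
      simpa using this
    have hn : ¬ σ.SameCycle a b := by
      intro hs
      have hf : full σ := by
        have : ∀ x, σ.SameCycle x a := fun x => (hx x).elim id fun h => h.trans hs.symm
        exact fun x y => (this x).trans (this y).symm
      have h1 := sign_full σ hf
      have h2 := sign_full _ h
      rw [← h1, Perm.sign_mul, Perm.sign_swap hab] at h2
      rcases Int.units_eq_one_or (Perm.sign σ) with h3 | h3 <;> rw [h3] at h2 <;> 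
        exact absurd h2 (by decide)
    refine ⟨Finset.univ.filter fun x => σ.SameCycle x a, ?_, by simp [Perm.SameCycle.refl], ?_⟩
    · intro x y
      simp only [Finset.mem_filter, Finset.mem_univ, true_and]
      constructor
      · intro hxy
        exact ⟨fun h => hxy.symm.trans h, fun h => hxy.trans h⟩
      · intro hiff
        by_cases hxa : σ.SameCycle x a
        · exact hxa.trans (hiff.1 hxa).symm
        · have hya : ¬ σ.SameCycle y a := fun h => hxa (hiff.2 h)
          exact ((hx x).resolve_left hxa).trans ((hx y).resolve_left hya).symm
    · simp only [Finset.mem_filter, Finset.mem_univ, true_and]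
      exact fun h => hn h.symm
  · rintro ⟨A, hA, ha, hb⟩
    have hn : ¬ σ.SameCycle a b := by
      rw [hA]; simp [ha, hb]
    have h1 : ∀ x, σ.SameCycle x a → (swap a b * σ).SameCycle x b :=
      fun x h => swap_join σ a b x h hn
    have h2 : ∀ x, σ.SameCycle x b → (swap a b * σ).SameCycle x a := by
      intro x h
      rw [swap_comm]
      exact swap_join σ b a x h fun h => hn h.symm
    have h3 := h1 a (Perm.SameCycle.refl _ _)
    have h4 : ∀ x, (swap a b * σ).SameCycle x a := by
      intro x
      by_cases hx : x ∈ A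
      · exact (h1 x ((hA x a).2 (by simp [hx, ha]))).trans h3.symm
      · exact h2 x ((hA x b).2 (by simp [hx, hb]))
    exact fun x y => (h4 x).trans (h4 y).symm

theorem spl_unique (σ : Perm X) {a : X} {A B : Finset X} (hA : spl σ A) (hB : spl σ B)
    (h : a ∈ A ↔ a ∈ B) : A = B := by
  ext x
  have h1 := hA a x
  have h2 := hB a x
  tauto

theorem spl_compl (σ : Perm X) {A : Finset X} (hA : spl σ A) : spl σ Aᶜ := by
  intro x y
  rw [hA]
  simp only [Finset.mem_compl]
  tauto

open Classical in
/-- For each transposition, splitting sets crossed by it. -/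
theorem count_cross (σ s : Perm X) (hs : s.IsSwap) :
    (Finset.univ.filter fun A : Finset X => spl σ A ∧ ∃ x ∈ A, s x ∉ A).card =
      if full (s * σ) then 2 else 0 := by
  obtain ⟨a, b, hab, rfl⟩ := hs
  have hcross : ∀ A : Finset X, (∃ x ∈ A, swap a b x ∉ A) ↔ ¬ (a ∈ A ↔ b ∈ A) := by
    intro A
    constructor
    · rintro ⟨x, hx, hx'⟩
      rcases eq_or_ne x a with rfl | h1
      · rw [swap_apply_left] at hx'; tauto
      · rcases eq_or_ne x b with rfl | h2
        · rw [swap_apply_right] at hx'; tauto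
        · rw [swap_apply_of_ne_of_ne h1 h2] at hx'; tauto
    · intro h
      by_cases ha : a ∈ A
      · exact ⟨a, ha, by rw [swap_apply_left]; tauto⟩
      · exact ⟨b, by tauto, by rw [swap_apply_right]; tauto⟩
  simp only [hcross]
  split_ifs with h
  · obtain ⟨A, hA, ha, hb⟩ := (full_swap_iff σ a b hab).1 h
    have : (Finset.univ.filter fun A : Finset X => spl σ A ∧ ¬ (a ∈ A ↔ b ∈ A)) = {A, Aᶜ} := by
      ext B
      simp only [Finset.mem_filter, Finset.mem_univ, true_and, Finset.mem_insert,
        Finset.mem_singleton]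
      constructor
      · rintro ⟨hB, hn⟩
        by_cases haB : a ∈ B
        · left; exact spl_unique σ hB hA (a := a) (by simp [ha, haB])
        · right; exact spl_unique σ hB (spl_compl σ hA) (a := a) (by simp [ha, haB])
      · rintro (rfl | rfl)
        · exact ⟨hA, by simp [ha, hb]⟩
        · exact ⟨spl_compl σ hA, by simp [ha, hb]⟩
    rw [this, Finset.card_pair]
    intro h
    have : a ∈ Aᶜ := h ▸ ha
    simp [ha] at this
  · rw [Finset.card_eq_zero, Finset.filter_eq_empty_iff]
    rintro A - ⟨hA, hn⟩
    apply h
    rw [full_swap_iff σ a b hab]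
    by_cases haA : a ∈ A
    · exact ⟨A, hA, haA, by tauto⟩
    · exact ⟨Aᶜ, spl_compl σ hA, by simpa using haA, by simp; tauto⟩

open Classical in
theorem card_crossing (A : Finset X) :
    ((swaps X).filter fun s => ∃ x ∈ A, s x ∉ A).card = A.card * Aᶜ.card := by
  rw [← Finset.card_product]
  symm
  refine Finset.card_bij (fun p _ => swap p.1 p.2) ?_ ?_ ?_
  · rintro ⟨a, b⟩ hp
    simp only [Finset.mem_product, Finset.mem_compl] at hp
    have hab : a ≠ b := by rintro rfl; exact hp.2 hp.1
    simp only [Finset.mem_filter, mem_swaps]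
    exact ⟨⟨a, b, hab, rfl⟩, a, hp.1, by simpa using hp.2⟩
  · rintro ⟨a, b⟩ hp ⟨c, d⟩ hq h
    simp only [Finset.mem_product, Finset.mem_compl] at hp hq
    simp only at h
    have hac : a = c := by
      by_contra hne
      have h1 : swap a b a = swap c d a := by rw [h]
      rw [swap_apply_left, swap_apply_of_ne_of_ne hne (by rintro rfl; exact hq.2 hp.1)] at h1
      exact hp.2 (h1 ▸ hp.1)
    subst hac
    have h1 : swap a b a = swap a d a := by rw [h]
    simp at h1
    rw [h1]
  · intro s hs
    simp only [Finset.mem_filter, mem_swaps] at hs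
    obtain ⟨⟨a, b, hab, rfl⟩, x, hx, hx'⟩ := hs
    rcases eq_or_ne x a with rfl | h1
    · rw [swap_apply_left] at hx'
      exact ⟨(x, b), by simp [hx, hx'], rfl⟩
    · rcases eq_or_ne x b with rfl | h2
      · rw [swap_apply_right] at hx'
        exact ⟨(x, a), by simp [hx, hx'], swap_comm _ _⟩
      · rw [swap_apply_of_ne_of_ne h1 h2] at hx'; tauto

theorem cut_join_count (m : ℕ) :
    2 * cnt (swaps X) (m + 1) full =
      ∑ A : Finset X, A.card * Aᶜ.card * cnt (swaps X) m (fun σ => spl σ A) := by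
  classical
  have hL : 2 * cnt (swaps X) (m + 1) full = ∑ s ∈ swaps X, ∑ σ : Perm X,
      (Finset.univ.filter fun A : Finset X => spl σ A ∧ ∃ x ∈ A, s x ∉ A).card *
        cnt (swaps X) m (fun y => y = σ) := by
    simp only [cnt]
    rw [Finset.mul_sum]
    refine Finset.sum_congr rfl fun s hs => ?_
    rw [cnt_eq_sum, Finset.mul_sum]
    refine Finset.sum_congr rfl fun σ _ => ?_
    rw [count_cross σ s (mem_swaps.1 hs)]
    split_ifs <;> simp
  rw [hL]
  simp_rw [Finset.card_filter, Finset.sum_mul]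
  have hR : ∀ A : Finset X, A.card * Aᶜ.card * cnt (swaps X) m (fun σ => spl σ A) =
      ∑ s ∈ swaps X, ∑ σ : Perm X, (if (spl σ A ∧ ∃ x ∈ A, s x ∉ A) then 1 else 0) *
        cnt (swaps X) m (fun y => y = σ) := by
    intro A
    rw [← card_crossing, Finset.card_filter, Finset.sum_mul]
    refine Finset.sum_congr rfl fun s _ => ?_
    rw [cnt_eq_sum, Finset.mul_sum]
    refine Finset.sum_congr rfl fun σ _ => ?_
    by_cases h1 : spl σ A <;> by_cases h2 : ∃ x ∈ A, s x ∉ A <;> simp [h1, h2]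
  simp_rw [hR]
  rw [Finset.sum_comm]
  conv_rhs => rw [Finset.sum_comm]; enter [2, s]; rw [Finset.sum_comm]
  rw [Finset.sum_comm]

theorem cnt_ne_zero (n : ℕ) (p : Perm X → Prop) (h : cnt (swaps X) n p ≠ 0) :
    ∃ σ, p σ ∧ Perm.sign σ = (-1) ^ n ∧ ∃ f : X → X, (∀ y, f (σ y) = f y) ∧
      Fintype.card X ≤ (Finset.univ.image f).card + n := by
  classical
  induction n generalizing p with
  | zero =>
    have : p 1 := by
      by_contra hp; simp [cnt, hp] at h
    exact ⟨1, this, by simp, id, by simp, by simp⟩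
  | succ n ih =>
    simp only [cnt] at h
    obtain ⟨s, hs, hne⟩ := Finset.exists_ne_zero_of_sum_ne_zero h
    obtain ⟨σ, hp, hsg, f, hf, hc⟩ := ih _ hne
    obtain ⟨a, b, hab, rfl⟩ := mem_swaps.1 hs
    refine ⟨_, hp, ?_, fun x => if f x = f b then f a else f x, ?_, ?_⟩
    · rw [Perm.sign_mul, Perm.sign_swap hab, hsg, pow_succ']
    · intro y
      beta_reduce
      rw [Perm.mul_apply, ← hf y]
      generalize σ y = z
      rcases eq_or_ne z a with rfl | h1
      · simp
      · rcases eq_or_ne z b with rfl | h2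
        · simp
        · rw [swap_apply_of_ne_of_ne h1 h2]
    · have hsub : Finset.univ.image f ⊆
          insert (f b) (Finset.univ.image fun x => if f x = f b then f a else f x) := by
        intro z hz
        obtain ⟨x, -, rfl⟩ := Finset.mem_image.1 hz
        by_cases hx : f x = f b
        · simp [hx]
        · refine Finset.mem_insert_of_mem (Finset.mem_image.2 ⟨x, by simp, by simp [hx]⟩)
      have h1 := Finset.card_le_card hsub
      have h2 := Finset.card_insert_le (f b)
        (Finset.univ.image fun x => if f x = f b then f a else f x)
      omega

/-- Riemann–Hurwitz: only lengths `2 g + |X| - 1` contribute. -/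
theorem cnt_full_ne_zero [Nonempty X] (n : ℕ) (h : cnt (swaps X) n full ≠ 0) :
    ∃ g, n + 1 = 2 * g + Fintype.card X := by
  classical
  obtain ⟨σ, hσ, hs, f, hf, hc⟩ := cnt_ne_zero n _ h
  have hz : ∀ (m : ℕ) y, f ((σ ^ m) y) = f y := by
    intro m y
    induction m with
    | zero => simp
    | succ m ih => rw [pow_succ', Perm.mul_apply, hf, ih]
  have h1 : (Finset.univ.image f).card ≤ 1 := by
    rw [Finset.card_le_one]
    intro u hu v hv
    obtain ⟨x, -, rfl⟩ := Finset.mem_image.1 hu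
    obtain ⟨y, -, rfl⟩ := Finset.mem_image.1 hv
    obtain ⟨i, -, -, hi⟩ := (hσ x y).exists_pow_eq
    rw [← hi, hz]
  rw [sign_full σ hσ] at hs
  have hle : Fintype.card X ≤ n + 1 := by omega
  have hpar : (-1 : ℤˣ) ^ (n + 1) = (-1) ^ Fintype.card X := by
    rw [pow_succ, ← hs]; simp
  obtain ⟨d, hd⟩ := Nat.exists_eq_add_of_le hle
  rw [hd, pow_add] at hpar
  have h3 : (-1 : ℤˣ) ^ d = 1 := by simpa using hpar
  rcases Nat.even_or_odd d with he | ho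
  · obtain ⟨g, hg⟩ := he
    exact ⟨g, by omega⟩
  · rw [ho.neg_one_pow] at h3
    exact absurd h3 (by decide)

end perm

section classes
variable {X : Type*} [Fintype X] [DecidableEq X]

open Classical in
/-- The cycle of `x`, as a finset. -/
noncomputable def cls (σ : Perm X) (x : X) : Finset X := Finset.univ.filter fun y => σ.SameCycle x y

/-- The set of cycles. -/
noncomputable def classes (σ : Perm X) : Finset (Finset X) := Finset.univ.image (cls σ)

theorem mem_cls {σ : Perm X} {x y : X} : y ∈ cls σ x ↔ σ.SameCycle x y := by simp [cls]

theorem map_val_eq_sum {α : Type*} (s : Finset α) (f : α → ℕ) :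
    s.val.map f = ∑ x ∈ s, ({f x} : Multiset ℕ) := by
  rw [Finset.sum, ← Multiset.sum_map_singleton (s.val.map f), Multiset.map_map]
  rfl

theorem classes_eq (σ : Perm X) :
    classes σ = σ.cycleFactorsFinset.image Perm.support ∪ (σ.supportᶜ).image (fun x => {x}) := by
  have h1 : ∀ x, σ x ≠ x → cls σ x = (σ.cycleOf x).support := by
    intro x hx
    ext y
    rw [mem_cls, Perm.mem_support_cycleOf_iff' hx]
  have h2 : ∀ x, σ x = x → cls σ x = {x} := by
    intro x hx
    ext y
    rw [mem_cls, Finset.mem_singleton]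
    constructor
    · rintro ⟨n, hn⟩
      rw [← hn]
      exact Perm.zpow_apply_eq_self_of_apply_eq_self hx n
    · rintro rfl
      exact Perm.SameCycle.refl _ _
  ext c
  simp only [classes, Finset.mem_image, Finset.mem_univ, true_and, Finset.mem_union,
    Finset.mem_compl, Perm.mem_support, not_not]
  constructor
  · rintro ⟨x, rfl⟩
    by_cases hx : σ x = x
    · right; exact ⟨x, hx, (h2 x hx).symm⟩
    · left
      exact ⟨σ.cycleOf x, Perm.cycleOf_mem_cycleFactorsFinset_iff.2 (Perm.mem_support.2 hx),
        (h1 x hx).symm⟩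
  · rintro (⟨f, hf, rfl⟩ | ⟨x, hx, rfl⟩)
    · obtain ⟨x, hx⟩ := (Perm.mem_cycleFactorsFinset_iff.1 hf).1.nonempty_support
      have h3 := Perm.cycle_is_cycleOf hx hf
      have h4 : σ x ≠ x := by
        rw [← Perm.mem_support, ← Perm.cycleOf_mem_cycleFactorsFinset_iff, ← h3]; exact hf
      exact ⟨x, by rw [h1 x h4, ← h3]⟩
    · exact ⟨x, h2 x hx⟩

theorem parts_eq (σ : Perm X) : σ.partition.parts = (classes σ).val.map Finset.card := by
  rw [map_val_eq_sum, classes_eq, Finset.sum_union, Finset.sum_image, Finset.sum_image,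
    Perm.parts_partition, Perm.cycleType_def, map_val_eq_sum]
  · congr 1
    simp only [Finset.card_singleton, Finset.sum_const, Finset.card_compl,
      Multiset.nsmul_singleton]
  · intro a _ b _ h
    simpa using h
  · intro f hf g hg h
    obtain ⟨x, hx⟩ := (Perm.mem_cycleFactorsFinset_iff.1 hf).1.nonempty_support
    have h3 := Perm.cycle_is_cycleOf hx hf
    rw [h] at hx
    rw [h3, ← Perm.cycle_is_cycleOf hx hg]
  · rw [Finset.disjoint_left]
    intro c hc hc'
    obtain ⟨f, hf, rfl⟩ := Finset.mem_image.1 hc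
    obtain ⟨x, hx, h⟩ := Finset.mem_image.1 hc'
    have := (Perm.mem_cycleFactorsFinset_iff.1 hf).1.two_le_card_support
    rw [← h] at this
    simp at this

theorem parts_full [Nonempty X] (σ : Perm X) :
    σ.partition.parts = {Fintype.card X} ↔ full σ := by
  rw [parts_eq]
  constructor
  · intro h
    have h1 : (classes σ).card = 1 := by
      have := congrArg Multiset.card h
      simpa using this
    rw [Finset.card_eq_one] at h1
    obtain ⟨A, hA⟩ := h1
    have h2 : ∀ x, cls σ x = A := by
      intro x
      have : cls σ x ∈ classes σ := Finset.mem_image_of_mem _ (Finset.mem_univ x)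
      rw [hA] at this
      simpa using this
    intro x y
    rw [← mem_cls, h2 x, ← h2 y, mem_cls]
  · intro h
    have h1 : cls σ = fun _ => Finset.univ := by
      funext x
      ext y
      simp [mem_cls, h x y]
    have h2 : classes σ = {Finset.univ} := by
      rw [classes, h1]
      ext A
      simp [eq_comm]
    rw [h2]
    simp

theorem spl_classes (σ : Perm X) (A : Finset X) (h1 : A.Nonempty) (h2 : Aᶜ.Nonempty) :
    spl σ A ↔ classes σ = {A, Aᶜ} := by
  constructor
  · intro h
    have hx : ∀ x, cls σ x = if x ∈ A then A else Aᶜ := by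
      intro x
      ext y
      rw [mem_cls, h]
      split_ifs with hx <;> simp [hx]
    ext B
    simp only [classes, Finset.mem_image, Finset.mem_univ, true_and, Finset.mem_insert,
      Finset.mem_singleton]
    constructor
    · rintro ⟨x, rfl⟩
      rw [hx]
      split_ifs <;> simp
    · rintro (rfl | rfl)
      · obtain ⟨x, h⟩ := h1
        exact ⟨x, by rw [hx, if_pos h]⟩
      · obtain ⟨x, h⟩ := h2
        exact ⟨x, by rw [hx, if_neg (by simpa using h)]⟩
  · intro h x y
    have hm : ∀ x, cls σ x = A ∨ cls σ x = Aᶜ := by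
      intro x
      have : cls σ x ∈ classes σ := Finset.mem_image_of_mem _ (Finset.mem_univ x)
      rw [h] at this
      simpa using this
    have hself : x ∈ cls σ x := mem_cls.2 (Perm.SameCycle.refl _ _)
    rw [← mem_cls]
    rcases hm x with hx | hx
    · rw [hx] at hself ⊢
      tauto
    · rw [hx] at hself ⊢
      simp only [Finset.mem_compl] at hself ⊢
      tauto

open Classical in
theorem count_spl (σ : Perm X) (α β : ℕ) (hα : 0 < α) (hβ : 0 < β)
    (hc : α + β = Fintype.card X) :
    ((Finset.powersetCard α Finset.univ).filter fun A : Finset X => spl σ A).card =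
      if σ.partition.parts = {α, β} then (if α = β then 2 else 1) else 0 := by
  have hne : ∀ A : Finset X, A.card = α → A.Nonempty ∧ Aᶜ.Nonempty ∧ Aᶜ.card = β := by
    intro A hA
    have hA' : Aᶜ.card = β := by rw [Finset.card_compl]; omega
    exact ⟨Finset.card_pos.1 (by omega), Finset.card_pos.1 (by omega), hA'⟩
  have hneq : ∀ A : Finset X, A.Nonempty → A ≠ Aᶜ := by
    rintro A ⟨x, hx⟩ h
    have : x ∈ Aᶜ := h ▸ hx
    simp [hx] at this
  have hparts : ∀ A : Finset X, A.card = α → spl σ A → σ.partition.parts = {α, β} := by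
    intro A hA hs
    obtain ⟨h1, h2, h3⟩ := hne A hA
    rw [spl_classes σ A h1 h2] at hs
    rw [parts_eq, map_val_eq_sum, hs, Finset.sum_pair (hneq A h1), hA, h3]
    rfl
  have hex : σ.partition.parts = {α, β} → ∃ A : Finset X, A.card = α ∧ spl σ A := by
    intro h
    rw [parts_eq] at h
    have hmem : α ∈ (classes σ).val.map Finset.card := by rw [h]; simp
    obtain ⟨A, hA, hAc⟩ := Multiset.mem_map.1 hmem
    have hA : A ∈ classes σ := hA
    have hcard : (classes σ).card = 2 := by
      have := congrArg Multiset.card h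
      simpa using this
    have he : ((classes σ).erase A).card = 1 := by
      rw [Finset.card_erase_of_mem hA, hcard]
    obtain ⟨C, hC⟩ := Finset.card_eq_one.1 he
    have hCA : C ≠ A := by
      have : C ∈ (classes σ).erase A := by rw [hC]; simp
      exact (Finset.mem_erase.1 this).1
    have hcl : classes σ = {A, C} := by
      rw [← Finset.insert_erase hA, hC]
    have hCc : C.card = β := by
      have := congrArg Multiset.sum h
      rw [map_val_eq_sum, hcl, Finset.sum_pair hCA.symm] at this
      simp at this
      omega
    obtain ⟨h1, h2, h3⟩ := hne A hAc
    have hsub : Aᶜ ⊆ C := by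
      intro x hx
      have hself : x ∈ cls σ x := mem_cls.2 (Perm.SameCycle.refl _ _)
      have hm : cls σ x ∈ classes σ := Finset.mem_image_of_mem _ (Finset.mem_univ x)
      rw [hcl, Finset.mem_insert, Finset.mem_singleton] at hm
      rcases hm with hm | hm
      · rw [hm] at hself
        simp [hself] at hx
      · rwa [hm] at hself
    have heq : Aᶜ = C := Finset.eq_of_subset_of_card_le hsub (by omega)
    exact ⟨A, hAc, (spl_classes σ A h1 h2).2 (by rw [hcl, heq])⟩
  have huniq : ∀ A B : Finset X, A.card = α → spl σ A → spl σ B → B = A ∨ B = Aᶜ := by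
    intro A B hA hs hB
    obtain ⟨⟨a, ha⟩, -, -⟩ := hne A hA
    by_cases haB : a ∈ B
    · left; exact spl_unique σ hB hs (a := a) (by simp [ha, haB])
    · right; exact spl_unique σ hB (spl_compl σ hs) (a := a) (by simp [ha, haB])
  split_ifs with h hab
  · obtain ⟨A, hA, hs⟩ := hex h
    obtain ⟨h1, h2, h3⟩ := hne A hA
    rw [← Finset.card_pair (hneq A h1)]
    congr 1
    ext B
    simp only [Finset.mem_filter, Finset.mem_powersetCard, Finset.subset_univ, true_and,
      Finset.mem_insert, Finset.mem_singleton]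
    constructor
    · rintro ⟨hB, hsB⟩
      exact huniq A B hA hs hsB
    · rintro (rfl | rfl)
      · exact ⟨hA, hs⟩
      · exact ⟨h3.trans hab.symm, spl_compl σ hs⟩
  · obtain ⟨A, hA, hs⟩ := hex h
    obtain ⟨h1, h2, h3⟩ := hne A hA
    rw [Finset.card_eq_one]
    refine ⟨A, ?_⟩
    ext B
    simp only [Finset.mem_filter, Finset.mem_powersetCard, Finset.subset_univ, true_and,
      Finset.mem_singleton]
    constructor
    · rintro ⟨hB, hsB⟩
      rcases huniq A B hA hs hsB with h | h
      · exact h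
      · rw [h, h3] at hB
        exact absurd hB.symm hab
    · rintro rfl
      exact ⟨hA, hs⟩
  · rw [Finset.card_eq_zero, Finset.filter_eq_empty_iff]
    intro A hA hs
    exact h (hparts A (Finset.mem_powersetCard.1 hA).2 hs)

end classes

section disc
variable {X Y : Type*} [Fintype X] [DecidableEq X] [Fintype Y] [DecidableEq Y]

theorem isSwap_conj (e : X ≃ Y) (s : Perm X) (hs : s.IsSwap) :
    (e.permCongrHom s).IsSwap := by
  obtain ⟨a, b, hab, rfl⟩ := hs
  refine ⟨e a, e b, fun h => hab (e.injective h), ?_⟩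
  exact Equiv.symm_trans_swap_trans a b e

theorem full_conj (e : X ≃ Y) (s : Perm X) (hs : full s) : full (e.permCongrHom s) := by
  intro x y
  obtain ⟨n, hn⟩ := hs (e.symm x) (e.symm y)
  refine ⟨n, ?_⟩
  rw [← map_zpow]
  simp [Equiv.permCongr_apply, hn]

theorem cnt_equiv (e : X ≃ Y) (n : ℕ) :
    cnt (swaps X) n full = cnt (swaps Y) n full := by
  classical
  have h : swaps Y = (swaps X).image e.permCongrHom.toMonoidHom := by
    ext s
    simp only [mem_swaps, Finset.mem_image]
    constructor
    · intro hs
      exact ⟨e.symm.permCongrHom s, isSwap_conj _ _ hs, by ext; simp [Equiv.permCongr_apply]⟩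
    · rintro ⟨t, ht, rfl⟩
      exact isSwap_conj _ _ ht
  rw [h, cnt_map _ e.permCongrHom.injective]
  refine cnt_congr _ _ fun x => ⟨full_conj e x, fun h => ?_⟩
  have := full_conj e.symm _ h
  convert this
  ext; simp [Equiv.permCongr_apply]

open Classical in
/-- Transpositions preserving `A`. -/
noncomputable def swapsOn (A : Finset X) : Finset (Perm X) :=
  (swaps X).filter fun s => ∀ x, s x ∈ A ↔ x ∈ A

theorem mem_swapsOn {A : Finset X} {s : Perm X} :
    s ∈ swapsOn A ↔ s ∈ swaps X ∧ ∀ x, s x ∈ A ↔ x ∈ A := by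
  simp [swapsOn]

theorem subtypeCongr_zpow_left (A : Finset X) (σ : Perm {a // a ∈ A}) (τ : Perm {a // ¬ a ∈ A})
    (n : ℤ) : (Perm.subtypeCongrHom (· ∈ A) (σ, τ)) ^ n =
      Perm.subtypeCongrHom (· ∈ A) (σ ^ n, τ ^ n) := by
  rw [← map_zpow]; rfl

theorem spl_subtypeCongr (A : Finset X) (σ : Perm {a // a ∈ A}) (τ : Perm {a // ¬ a ∈ A}) :
    spl (Perm.subtypeCongrHom (· ∈ A) (σ, τ)) A ↔ full σ ∧ full τ := by
  constructor
  · intro h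
    constructor
    · intro x y
      obtain ⟨n, hn⟩ := (h x y).2 (by simp [x.2, y.2])
      refine ⟨n, ?_⟩
      rw [subtypeCongr_zpow_left] at hn
      apply Subtype.ext
      simpa using hn
    · intro x y
      obtain ⟨n, hn⟩ := (h x y).2 (by simp [x.2, y.2])
      refine ⟨n, ?_⟩
      rw [subtypeCongr_zpow_left] at hn
      apply Subtype.ext
      simpa using hn
  · rintro ⟨h1, h2⟩ x y
    constructor
    · rintro ⟨n, hn⟩
      rw [subtypeCongr_zpow_left, Perm.subtypeCongrHom_apply, Perm.subtypeCongr.apply] at hn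
      rw [← hn]
      split_ifs with hx
      · simp only [hx, true_iff]; exact Subtype.property _
      · simp only [hx, false_iff]; exact ((τ ^ n) ⟨x, hx⟩).2
    · intro hxy
      by_cases hx : x ∈ A
      · obtain ⟨n, hn⟩ := h1 ⟨x, hx⟩ ⟨y, hxy.1 hx⟩
        refine ⟨n, ?_⟩
        rw [subtypeCongr_zpow_left, Perm.subtypeCongrHom_apply, Perm.subtypeCongr.left_apply _ _ hx]
        exact congrArg Subtype.val hn
      · obtain ⟨n, hn⟩ := h2 ⟨x, hx⟩ ⟨y, fun h => hx (hxy.2 h)⟩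
        refine ⟨n, ?_⟩
        rw [subtypeCongr_zpow_left, Perm.subtypeCongrHom_apply,
          Perm.subtypeCongr.right_apply _ _ hx]
        exact congrArg Subtype.val hn

theorem subtypeCongr_swap_left (A : Finset X) (a b : {a // a ∈ A}) :
    Perm.subtypeCongrHom (· ∈ A) (swap a b, 1) = swap (a : X) b := by
  ext x
  rw [Perm.subtypeCongrHom_apply, Perm.subtypeCongr.apply]
  split_ifs with h
  · simp only [swap_apply_def, Subtype.ext_iff]
    split_ifs <;> rfl
  · rw [swap_apply_of_ne_of_ne]
    · rfl
    · rintro rfl; exact h a.2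
    · rintro rfl; exact h b.2

theorem subtypeCongr_swap_right (A : Finset X) (a b : {a // ¬ a ∈ A}) :
    Perm.subtypeCongrHom (· ∈ A) (1, swap a b) = swap (a : X) b := by
  ext x
  rw [Perm.subtypeCongrHom_apply, Perm.subtypeCongr.apply]
  split_ifs with h
  · rw [swap_apply_of_ne_of_ne]
    · rfl
    · rintro rfl; exact a.2 h
    · rintro rfl; exact b.2 h
  · simp only [swap_apply_def, Subtype.ext_iff]
    split_ifs <;> rfl

theorem swapsOn_eq (A : Finset X) [DecidableEq (Perm {a // a ∈ A} × Perm {a // ¬ a ∈ A})] :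
    swapsOn A = ((swaps {a // a ∈ A}).image (fun s => (s, (1 : Perm {a // ¬ a ∈ A}))) ∪
      (swaps {a // ¬ a ∈ A}).image (fun t => ((1 : Perm {a // a ∈ A}), t))).image
        (Perm.subtypeCongrHom (· ∈ A)) := by
  ext s
  simp only [swapsOn, Finset.mem_filter, Finset.mem_image, Finset.mem_union, mem_swaps]
  constructor
  · rintro ⟨⟨a, b, hab, rfl⟩, h⟩
    have h1 := h a
    rw [swap_apply_left] at h1
    by_cases ha : a ∈ A
    · have hb := h1.2 ha
      refine ⟨(swap ⟨a, ha⟩ ⟨b, hb⟩, 1), Or.inl ⟨_, ⟨_, _, ?_, rfl⟩, rfl⟩,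
        subtypeCongr_swap_left A ⟨a, ha⟩ ⟨b, hb⟩⟩
      simpa using hab
    · have hb : b ∉ A := fun h => ha (h1.1 h)
      refine ⟨(1, swap ⟨a, ha⟩ ⟨b, hb⟩), Or.inr ⟨_, ⟨_, _, ?_, rfl⟩, rfl⟩,
        subtypeCongr_swap_right A ⟨a, ha⟩ ⟨b, hb⟩⟩
      simpa using hab
  · rintro ⟨_, ⟨_, ⟨a, b, hab, rfl⟩, rfl⟩ | ⟨_, ⟨a, b, hab, rfl⟩, rfl⟩, rfl⟩
    · refine ⟨⟨a, b, fun h => hab (Subtype.ext h), subtypeCongr_swap_left A a b⟩, fun x => ?_⟩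
      rw [Perm.subtypeCongrHom_apply, Perm.subtypeCongr.apply]
      split_ifs with hx
      · simp only [hx, iff_true]; exact Subtype.property _
      · simp only [hx, iff_false]; exact hx
    · refine ⟨⟨a, b, fun h => hab (Subtype.ext h), subtypeCongr_swap_right A a b⟩, fun x => ?_⟩
      rw [Perm.subtypeCongrHom_apply, Perm.subtypeCongr.apply]
      split_ifs with hx
      · simp only [hx, iff_true]; exact Subtype.property _
      · simp only [hx, iff_false]; exact (swap a b ⟨x, hx⟩).2

/-- Number of length `n` factorizations of full cycles on `Fin k`. -/
noncomputable def N (k n : ℕ) : ℕ := cnt (swaps (Fin k)) n full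

theorem cnt_disc (A : Finset X) (α β m : ℕ) (hα : A.card = α) (hβ : Aᶜ.card = β) :
    cnt (swapsOn A) m (fun σ => spl σ A) =
      ∑ ij ∈ Finset.HasAntidiagonal.antidiagonal m, m.choose ij.1 * (N α ij.1 * N β ij.2) := by
  classical
  rw [swapsOn_eq, cnt_map _ (Perm.subtypeCongrHom_injective _)]
  rw [cnt_congr _ _ (q := fun x => full x.1 ∧ full x.2) (fun x => spl_subtypeCongr A x.1 x.2)]
  rw [cnt_prod]
  · refine Finset.sum_congr rfl fun ij _ => ?_
    have e1 : {a // a ∈ A} ≃ Fin α := Fintype.equivFinOfCardEq (by simp [hα])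
    have e2 : {a // ¬ a ∈ A} ≃ Fin β := Fintype.equivFinOfCardEq (by
      rw [← hβ, Fintype.card_subtype]
      congr 1
      ext; simp)
    rw [cnt_equiv e1, cnt_equiv e2]
    rfl
  · rw [mem_swaps]
    rintro ⟨a, b, hab, h⟩
    apply hab
    have := congrArg (fun f => f b) h
    simpa using this.symm

end disc

section final

theorem count_one (k n : ℕ) (hk : 1 ≤ k) : hurwitzCount k n {k} = N k n := by
  have : Nonempty (Fin k) := ⟨⟨0, hk⟩⟩
  rw [N, ← card_tuples, hurwitzCount]
  have hp : ∀ σ : Perm (Fin k), σ.partition.parts = {k} ↔ full σ := by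
    intro σ
    have h := parts_full σ
    simp only [Fintype.card_fin] at h
    exact h
  have hinv : ∀ σ : Perm (Fin k), full σ⁻¹ ↔ full σ := fun σ => by
    simp only [full, Perm.sameCycle_inv]
  refine Nat.card_congr
    { toFun := fun p => ⟨p.1.1, fun i => mem_swaps.2 (p.2.1 i), ?_⟩
      invFun := fun t => ⟨(t.1, (List.ofFn t.1).prod⁻¹), fun i => mem_swaps.1 (t.2.1 i),
        (hp _).2 ((hinv _).2 t.2.2), mul_inv_cancel _, ?_⟩
      left_inv := ?_
      right_inv := fun t => rfl }
  · have h2 := (hp _).1 p.2.2.1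
    have h3 := p.2.2.2.1
    rw [mul_eq_one_iff_eq_inv] at h3
    rw [h3, hinv]
    exact h2
  · intro a b
    obtain ⟨n, hn⟩ := (hinv _).2 t.2.2 a b
    have hmem : (List.ofFn t.1).prod⁻¹ ∈
        Subgroup.closure (Set.range t.1 ∪ {(List.ofFn t.1).prod⁻¹}) :=
      Subgroup.subset_closure (by simp)
    exact ⟨(List.ofFn t.1).prod⁻¹ ^ n, Subgroup.zpow_mem _ hmem n, hn⟩
  · rintro ⟨⟨t, σ⟩, h⟩
    apply Subtype.ext
    have h3 := h.2.2.1
    rw [mul_eq_one_iff_inv_eq] at h3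
    exact Prod.ext rfl h3

theorem trans_iff (X : Type*) [Fintype X] [DecidableEq X] (A : Finset X) (h1 : A.Nonempty)
    (h2 : Aᶜ.Nonempty) (m : ℕ) (t : Fin m → Perm X) (ht : ∀ i, t i ∈ swaps X)
    (hs : spl (List.ofFn t).prod A) :
    (∀ a b : X, ∃ g ∈ Subgroup.closure (Set.range t ∪ {(List.ofFn t).prod⁻¹}), g a = b) ↔
      ¬ ∀ i, t i ∈ swapsOn A := by
  constructor
  · intro h hA
    obtain ⟨a, ha⟩ := h1
    obtain ⟨b, hb⟩ := h2
    obtain ⟨g, hg, hgb⟩ := h a b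
    have hpres : ∀ i, ∀ x, t i x ∈ A ↔ x ∈ A := fun i => (mem_swapsOn.1 (hA i)).2
    have hall : ∀ g ∈ Subgroup.closure (Set.range t ∪ {(List.ofFn t).prod⁻¹}),
        ∀ x, g x ∈ A ↔ x ∈ A := by
      intro g hg
      induction hg using Subgroup.closure_induction with
      | mem g hg =>
        rcases hg with ⟨i, rfl⟩ | hg
        · exact hpres i
        · rw [Set.mem_singleton_iff] at hg
          intro x
          have : (List.ofFn t).prod.SameCycle (g x) x := ⟨1, by simp [hg]⟩
          exact (hs _ _).1 this
      | one => simp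
      | mul x y _ _ hx hy =>
        intro z
        rw [Perm.mul_apply, hx, hy]
      | inv x _ hx =>
        intro z
        rw [← hx (x⁻¹ z)]
        simp
    rw [Finset.mem_compl, ← hgb, hall g hg] at hb
    exact hb ha
  · intro h
    push Not at h
    obtain ⟨i, hi⟩ := h
    have hi' : ¬ ∀ x, t i x ∈ A ↔ x ∈ A := fun h => hi (mem_swapsOn.2 ⟨ht i, h⟩)
    set K := Subgroup.closure (Set.range t ∪ {(List.ofFn t).prod⁻¹}) with hK
    have hti : t i ∈ K := Subgroup.subset_closure (Or.inl ⟨i, rfl⟩)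
    have hpK : (List.ofFn t).prod ∈ K := by
      rw [← inv_mem_iff]
      exact Subgroup.subset_closure (Or.inr rfl)
    have hsame : ∀ x y, (x ∈ A ↔ y ∈ A) → ∃ g ∈ K, g x = y := by
      intro x y hxy
      obtain ⟨n, hn⟩ := (hs x y).2 hxy
      exact ⟨_, Subgroup.zpow_mem _ hpK n, hn⟩
    push Not at hi'
    obtain ⟨x, hx⟩ := hi'
    intro a b
    by_cases hab : a ∈ A ↔ b ∈ A
    · exact hsame a b hab
    · by_cases hax : a ∈ A ↔ x ∈ A
      · obtain ⟨g1, hg1, h1⟩ := hsame a x hax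
        obtain ⟨g2, hg2, h2⟩ := hsame (t i x) b (by tauto)
        exact ⟨g2 * t i * g1, mul_mem (mul_mem hg2 hti) hg1, by simp [h1, h2]⟩
      · obtain ⟨g1, hg1, h1⟩ := hsame a (t i x) (by tauto)
        obtain ⟨g2, hg2, h2⟩ := hsame x b (by tauto)
        exact ⟨g2 * (t i)⁻¹ * g1, mul_mem (mul_mem hg2 (inv_mem hti)) hg1, by simp [h1, h2]⟩

open Classical in
theorem count_two_eq (α β m : ℕ) : hurwitzCount (α + β) m {α, β} =
    (Finset.univ.filter fun t : Fin m → Perm (Fin (α + β)) => (∀ i, t i ∈ swaps _) ∧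
      (∀ a b, ∃ g ∈ Subgroup.closure (Set.range t ∪ {(List.ofFn t).prod⁻¹}), g a = b) ∧
      (List.ofFn t).prod⁻¹.partition.parts = {α, β}).card := by
  rw [hurwitzCount, ← Fintype.card_subtype]
  refine Eq.trans (Nat.card_congr ?_) Nat.card_eq_fintype_card
  refine
    { toFun := fun p => ⟨p.1.1, fun i => mem_swaps.2 (p.2.1 i), ?_⟩
      invFun := fun t => ⟨(t.1, (List.ofFn t.1).prod⁻¹), fun i => mem_swaps.1 (t.2.1 i),
        t.2.2.2, mul_inv_cancel _, t.2.2.1⟩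
      left_inv := ?_
      right_inv := fun t => rfl }
  · have h3 := p.2.2.2.1
    rw [mul_eq_one_iff_inv_eq] at h3
    rw [h3]
    exact ⟨p.2.2.2.2, p.2.2.1⟩
  · rintro ⟨⟨t, σ⟩, h⟩
    apply Subtype.ext
    have h3 := h.2.2.1
    rw [mul_eq_one_iff_inv_eq] at h3
    exact Prod.ext rfl h3

theorem spl_inv {X : Type*} [Fintype X] [DecidableEq X] (σ : Perm X) (A : Finset X) :
    spl σ⁻¹ A ↔ spl σ A := by
  simp only [spl, Perm.sameCycle_inv]

theorem count_two (α β m : ℕ) (hα : 0 < α) (hβ : 0 < β) :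
    ∑ A ∈ Finset.powersetCard α (Finset.univ : Finset (Fin (α + β))),
      cnt (swaps (Fin (α + β))) m (fun σ => spl σ A) =
    (if α = β then 2 else 1) * hurwitzCount (α + β) m {α, β} +
      (α + β).choose α * ∑ ij ∈ Finset.HasAntidiagonal.antidiagonal m,
        m.choose ij.1 * (N α ij.1 * N β ij.2) := by
  classical
  have hsplit : ∀ A ∈ Finset.powersetCard α (Finset.univ : Finset (Fin (α + β))),
      cnt (swaps (Fin (α + β))) m (fun σ => spl σ A) =
      (∑ t : Fin m → Perm (Fin (α + β)), if ((∀ i, t i ∈ swaps _) ∧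
        (∀ a b, ∃ g ∈ Subgroup.closure (Set.range t ∪ {(List.ofFn t).prod⁻¹}), g a = b)) ∧
        spl (List.ofFn t).prod⁻¹ A then 1 else 0) +
      ∑ ij ∈ Finset.HasAntidiagonal.antidiagonal m,
        m.choose ij.1 * (N α ij.1 * N β ij.2) := by
    intro A hA
    have hAc := (Finset.mem_powersetCard.1 hA).2
    have hAc' : Aᶜ.card = β := by rw [Finset.card_compl, Fintype.card_fin]; omega
    have h1 : A.Nonempty := Finset.card_pos.1 (by omega)
    have h2 : Aᶜ.Nonempty := Finset.card_pos.1 (by omega)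
    rw [← cnt_disc A α β m hAc hAc', ← card_tuples, ← card_tuples, Nat.card_eq_fintype_card,
      Nat.card_eq_fintype_card, Fintype.card_subtype, Fintype.card_subtype, Finset.card_filter,
      Finset.card_filter, ← Finset.sum_add_distrib]
    refine Finset.sum_congr rfl fun t _ => ?_
    rw [spl_inv]
    by_cases hs : spl (List.ofFn t).prod A
    · by_cases ht : ∀ i, t i ∈ swaps _
      · have := trans_iff _ A h1 h2 m t ht hs
        simp only [this, hs, ht, and_true]
        by_cases h : ∀ i, t i ∈ swapsOn A <;> simp [h]
      · have ht' : ¬ ∀ i, t i ∈ swapsOn A := fun h => ht fun i => (mem_swapsOn.1 (h i)).1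
        simp [ht, ht']
    · simp [hs]
  rw [Finset.sum_congr rfl hsplit, Finset.sum_add_distrib, Finset.sum_const,
    Finset.card_powersetCard, Finset.card_univ, Fintype.card_fin, smul_eq_mul, count_two_eq]
  congr 1
  rw [Finset.card_filter, Finset.mul_sum, Finset.sum_comm]
  refine Finset.sum_congr rfl fun t _ => ?_
  have hc := count_spl (List.ofFn t).prod⁻¹ α β hα hβ (by simp)
  rw [Finset.card_filter] at hc
  by_cases ht : (∀ i, t i ∈ swaps _) ∧
        (∀ a b, ∃ g ∈ Subgroup.closure (Set.range t ∪ {(List.ofFn t).prod⁻¹}), g a = b)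
  · simp only [ht, implies_true, and_self, true_and]
    rw [hc]
    by_cases h : (List.ofFn t).prod⁻¹.partition.parts = {α, β} <;> simp [h]
  · simp only [ht, false_and, ← and_assoc]
    simp

theorem recursion (k m : ℕ) : 2 * N k (m + 1) =
    ∑ α ∈ Finset.Ico 1 k, α * (k - α) *
      ((if α = k - α then 2 else 1) * hurwitzCount k m {α, k - α} +
      k.choose α * ∑ ij ∈ Finset.HasAntidiagonal.antidiagonal m,
        m.choose ij.1 * (N α ij.1 * N (k - α) ij.2)) := by
  classical
  rw [N, cut_join_count, ← Finset.powerset_univ,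
    ← Finset.sum_fiberwise_of_maps_to (t := Finset.range (k + 1)) (g := Finset.card)
      (fun A _ => by
        have := Finset.card_le_univ A
        rw [Fintype.card_fin] at this
        exact Finset.mem_range.2 (by omega))]
  symm
  apply Finset.sum_subset_zero_on_sdiff
  · intro x hx
    simp at hx ⊢
    omega
  · intro α hα
    apply Finset.sum_eq_zero
    intro A hA
    have h1 := (Finset.mem_filter.1 hA).2
    have h2 : α = 0 ∨ α = k := by
      simp at hα
      omega
    rcases h2 with h2 | h2
    · simp [h1, h2]
    · simp [Finset.card_compl, h1, h2]
  · intro α hα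
    obtain ⟨h1, h2⟩ := Finset.mem_Ico.1 hα
    obtain ⟨β, rfl⟩ := Nat.exists_eq_add_of_le h2.le
    have hb : α + β - α = β := by omega
    rw [hb, ← count_two α β m h1 (by omega), Finset.mul_sum, ← Finset.powersetCard_eq_filter]
    refine Finset.sum_congr rfl fun A hA => ?_
    rw [Finset.card_compl, (Finset.mem_powersetCard.1 hA).2, Fintype.card_fin, hb]

theorem N_ne_zero (k n : ℕ) (hk : 1 ≤ k) (h : N k n ≠ 0) : ∃ g, n + 1 = 2 * g + k := by
  have : Nonempty (Fin k) := ⟨⟨0, hk⟩⟩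
  simpa using cnt_full_ne_zero n h

theorem antidiag_reindex (α β g m : ℕ) (hα : 1 ≤ α) (hβ : 1 ≤ β) (hm : m + 2 = 2 * g + α + β)
    (F : ℕ → ℕ → ℚ) :
    ∑ ij ∈ Finset.HasAntidiagonal.antidiagonal m, F ij.1 ij.2 * ((N α ij.1 : ℚ) * N β ij.2) =
    ∑ g1 ∈ Finset.range (g + 1), F (2 * g1 + α - 1) (2 * (g - g1) + β - 1) *
      ((N α (2 * g1 + α - 1) : ℚ) * N β (2 * (g - g1) + β - 1)) := by
  symm
  apply Finset.sum_of_injOn (fun g1 => (2 * g1 + α - 1, 2 * (g - g1) + β - 1))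
  · intro a _ b _ h
    simp only [Prod.mk.injEq] at h
    omega
  · intro a ha
    simp only [Finset.coe_range, Set.mem_Iio] at ha
    simp only [Finset.mem_coe, Finset.HasAntidiagonal.mem_antidiagonal]
    omega
  · rintro ⟨i, j⟩ hij hn
    rw [Finset.HasAntidiagonal.mem_antidiagonal] at hij
    simp only at hij
    by_contra hne
    have hi : N α i ≠ 0 := by
      rintro h; simp [h] at hne
    have hj : N β j ≠ 0 := by
      rintro h; simp [h] at hne
    obtain ⟨g1, h1⟩ := N_ne_zero α i hα hi
    obtain ⟨g2, h2⟩ := N_ne_zero β j hβ hj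
    apply hn
    refine ⟨g1, by simp; omega, ?_⟩
    simp only [Prod.mk.injEq]
    omega
  · intro a _
    rfl

theorem Hone_eq (g k : ℕ) (hk : 1 ≤ k) : Hone g k =
    (N k (2 * g + k - 1) : ℚ) / ((k.factorial : ℚ) * ((2 * g + k - 1).factorial : ℚ)) := by
  have h : 2 * g + 1 + k - 2 = 2 * g + k - 1 := by omega
  rw [Hone, hurwitzNumber]
  simp only [Multiset.sum_singleton, Multiset.card_singleton, h]
  rw [count_one k _ hk, div_div]

theorem Htwo_eq (g α β : ℕ) : Htwo g α β =
    ((if α = β then 2 else 1 : ℕ) : ℚ) * (hurwitzCount (α + β) (2 * g + α + β) {α, β} : ℚ) /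
      (((α + β).factorial : ℚ) * ((2 * g + α + β).factorial : ℚ)) := by
  have h : 2 * g + 2 + (α + β) - 2 = 2 * g + α + β := by omega
  have hs : ({α, β} : Multiset ℕ).sum = α + β := by simp
  have hc : Multiset.card ({α, β} : Multiset ℕ) = 2 := by simp
  rw [Htwo, hurwitzNumber]
  simp only [hs, hc, h]
  rw [← mul_div_assoc, div_div]
  push_cast
  rfl

end final
end CJ

/-- The cut-and-join equation for a one-part profile `(k)`:
`(2g-1+k) H_g(k) = (1/2) Σ_{α+β=k, α,β≥1} αβ ( H_{g-1}(α,β) + Σ_{g1+g2=g} H_{g1}(α) H_{g2}(β) )`. -/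
theorem cut_and_join_one_part (g k : ℕ) (hg : 1 ≤ g) (hk : 1 ≤ k) :
    (2 * (g : ℚ) - 1 + (k : ℚ)) * Hone g k =
      (1 / 2) * ∑ α ∈ Finset.Ico 1 k, (α : ℚ) * ((k - α : ℕ) : ℚ) *
        (Htwo (g - 1) α (k - α) +
          ∑ g1 ∈ Finset.range (g + 1), Hone g1 α * Hone (g - g1) (k - α)) := by
  obtain ⟨m, hm⟩ : ∃ m, m + 2 = 2 * g + k := ⟨2 * g + k - 2, by omega⟩
  have hr : 2 * g + k - 1 = m + 1 := by omega
  have hrec := congrArg (Nat.cast : ℕ → ℚ) (CJ.recursion k m)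
  push_cast at hrec
  have hL : (2 * (g : ℚ) - 1 + (k : ℚ)) * Hone g k =
      (1 / 2) * ((2 * (CJ.N k (m + 1) : ℚ)) / ((k.factorial : ℚ) * (m.factorial : ℚ))) := by
    have h1 : (2 * (g : ℚ) - 1 + (k : ℚ)) = (m : ℚ) + 1 := by
      have : ((m + 2 : ℕ) : ℚ) = ((2 * g + k : ℕ) : ℚ) := by rw [hm]
      push_cast at this
      linarith
    have hk0 : (k.factorial : ℚ) ≠ 0 := by exact_mod_cast k.factorial_ne_zero
    have hm0 : (m.factorial : ℚ) ≠ 0 := by exact_mod_cast m.factorial_ne_zero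
    have hm1 : (m : ℚ) + 1 ≠ 0 := by positivity
    rw [h1, CJ.Hone_eq g k hk, hr, Nat.factorial_succ]
    push_cast
    field_simp
  rw [hL, hrec, Finset.sum_div]
  congr 1
  refine Finset.sum_congr rfl fun α hα => ?_
  obtain ⟨h1, h2⟩ := Finset.mem_Ico.1 hα
  obtain ⟨β, rfl⟩ := Nat.exists_eq_add_of_le h2.le
  have hb : α + β - α = β := by omega
  have hβ : 1 ≤ β := by omega
  have hcast : ((α + β : ℕ) : ℚ) - α = β := by push_cast; ring
  have hm' : 2 * (g - 1) + α + β = m := by omega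
  rw [hb, CJ.Htwo_eq, hm']
  rw [CJ.antidiag_reindex α β g m h1 hβ (by omega) (fun i _ => (m.choose i : ℚ))]
  have hk0 : ((α + β).factorial : ℚ) ≠ 0 := by exact_mod_cast (α + β).factorial_ne_zero
  have hm0 : (m.factorial : ℚ) ≠ 0 := by exact_mod_cast m.factorial_ne_zero
  rw [mul_div_assoc, add_div]
  push_cast
  congr 2
  rw [Finset.mul_sum, Finset.sum_div]
  refine Finset.sum_congr rfl fun g1 hg1 => ?_
  rw [Finset.mem_range] at hg1
  rw [CJ.Hone_eq g1 α h1, CJ.Hone_eq (g - g1) β hβ]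
  have c1 : (α + β).choose α * α.factorial * β.factorial = (α + β).factorial := by
    have := Nat.choose_mul_factorial_mul_factorial (n := α + β) (k := α) (by omega)
    rwa [hb] at this
  have hij : 2 * g1 + α - 1 + (2 * (g - g1) + β - 1) = m := by omega
  generalize 2 * g1 + α - 1 = i at *
  generalize 2 * (g - g1) + β - 1 = j at *
  have c2 : m.choose i * i.factorial * j.factorial = m.factorial := by
    have := Nat.choose_mul_factorial_mul_factorial (n := m) (k := i) (by omega)
    rwa [show m - i = j by omega] at this
  rw [← c1, ← c2]
  have p1 : ((α + β).choose α : ℚ) ≠ 0 := by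
    exact_mod_cast (Nat.choose_pos (by omega)).ne'
  have p2 : (m.choose i : ℚ) ≠ 0 := by
    exact_mod_cast (Nat.choose_pos (by omega)).ne'
  have f1 : (α.factorial : ℚ) ≠ 0 := by exact_mod_cast α.factorial_ne_zero
  have f2 : (β.factorial : ℚ) ≠ 0 := by exact_mod_cast β.factorial_ne_zero
  have f3 : (i.factorial : ℚ) ≠ 0 := by exact_mod_cast i.factorial_ne_zero
  have f4 : (j.factorial : ℚ) ≠ 0 := by exact_mod_cast j.factorial_ne_zero
  push_cast
  field_simp
end
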